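/- There exist constants C > 0 and λ₀ > 0, depending only on α and β, such that for every real Dirichlet quasimode datum (u, λ, f) on the stadium S with λ ≥ λ₀ and ‖u‖_{L²(S)} = 1, one has λ² ‖f‖²_{L²(S)} + λ⁴ ‖u‖²_{L²(W)} ≥ C, where ‖u‖_{L²(W)} is the L² norm of u over the wings W. -/

import Mathlib

open MeasureTheory Real Set Filter

noncomputable section

/-- Partial derivative in the first (x) variable. -/
def pdx (u : ℝ × ℝ → ℝ) (p : ℝ × ℝ) : ℝ := deriv (fun t => u (t, p.2)) p.1

/-- Partial derivative in the second (y) variable. -/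
def pdy (u : ℝ × ℝ → ℝ) (p : ℝ × ℝ) : ℝ := deriv (fun t => u (p.1, t)) p.2

/-- The positive Laplacian `Δu = -u_xx - u_yy`. -/
def lap (u : ℝ × ℝ → ℝ) (p : ℝ × ℝ) : ℝ := -(pdx (pdx u) p) - (pdy (pdy u) p)

/-- The central rectangle `R = [-α,α] × [-β,β]`. -/
def Rect (α β : ℝ) : Set (ℝ × ℝ) := Icc (-α) α ×ˢ Icc (-β) β

/-- The wings `W = W₊ ∪ W₋`, two half-discs of radius β centered at `(±α, 0)`. -/
def Wings (α β : ℝ) : Set (ℝ × ℝ) :=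
  {p | (p.1 - α) ^ 2 + p.2 ^ 2 ≤ β ^ 2 ∧ α ≤ p.1} ∪
  {p | (p.1 + α) ^ 2 + p.2 ^ 2 ≤ β ^ 2 ∧ p.1 ≤ -α}

/-- The Bunimovich stadium `S = R ∪ W`. -/
def Stadium (α β : ℝ) : Set (ℝ × ℝ) := Rect α β ∪ Wings α β

/-- The boundary `∂S`: two horizontal segments and two semicircles. -/
def StadiumBoundary (α β : ℝ) : Set (ℝ × ℝ) :=
  {p | |p.1| ≤ α ∧ (p.2 = β ∨ p.2 = -β)} ∪
  {p | (|p.1| - α) ^ 2 + p.2 ^ 2 = β ^ 2 ∧ α ≤ |p.1|}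

/-- Boundary integral `∫_{∂S} g dl` of an integrand `g` depending on the boundary point
and the outward unit normal at that point. -/
def bdryInt (α β : ℝ) (g : ℝ × ℝ → ℝ × ℝ → ℝ) : ℝ :=
  (∫ x in (-α)..α, (g (x, β) (0, 1) + g (x, -β) (0, -1))) +
  β * ∫ θ in (-(π / 2))..(π / 2),
    (g (α + β * cos θ, β * sin θ) (cos θ, sin θ) +
     g (-(α + β * cos θ), β * sin θ) (-cos θ, sin θ))

/-- Boundary integral `∫_{∂S ∩ W} g dl` over the two semicircles only. -/
def bdryIntW (α β : ℝ) (g : ℝ × ℝ → ℝ × ℝ → ℝ) : ℝ :=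
  β * ∫ θ in (-(π / 2))..(π / 2),
    (g (α + β * cos θ, β * sin θ) (cos θ, sin θ) +
     g (-(α + β * cos θ), β * sin θ) (-cos θ, sin θ))

/-- The normal derivative `∂_N u = n₁ ∂_x u + n₂ ∂_y u` at a boundary point `p`
with outward unit normal `n`. -/
def nderiv (u : ℝ × ℝ → ℝ) (p n : ℝ × ℝ) : ℝ := n.1 * pdx u p + n.2 * pdy u p

/-- A real Dirichlet quasimode datum `(u, λ, f)` on the stadium: `λ > 0`, `u` smooth on a
neighborhood of `S`, `u = 0` on `∂S`, and `(Δ - λ²) u = f` on `S`. -/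
structure QMDatum (α β : ℝ) where
  u : ℝ × ℝ → ℝ
  lam : ℝ
  f : ℝ × ℝ → ℝ
  lam_pos : 0 < lam
  smooth : ∃ V : Set (ℝ × ℝ), IsOpen V ∧ Stadium α β ⊆ V ∧ ContDiffOn ℝ (⊤ : ℕ∞) u V
  dirichlet : ∀ p ∈ StadiumBoundary α β, u p = 0
  eqn : ∀ p ∈ Stadium α β, lap u p - lam ^ 2 * u p = f p


lemma pdx_eq {u : ℝ × ℝ → ℝ} {p : ℝ × ℝ} (hu : DifferentiableAt ℝ u p) :
    pdx u p = fderiv ℝ u p (1, 0) := by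
  have h1 : HasFDerivAt u (fderiv ℝ u p) (p.1, p.2) := hu.hasFDerivAt
  have h2 : HasDerivAt (fun t : ℝ => (t, p.2)) ((1 : ℝ), (0 : ℝ)) p.1 :=
    (hasDerivAt_id _).prodMk (hasDerivAt_const _ _)
  exact (h1.comp_hasDerivAt p.1 h2).deriv

lemma pdy_eq {u : ℝ × ℝ → ℝ} {p : ℝ × ℝ} (hu : DifferentiableAt ℝ u p) :
    pdy u p = fderiv ℝ u p (0, 1) := by
  have h1 : HasFDerivAt u (fderiv ℝ u p) (p.1, p.2) := hu.hasFDerivAt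
  have h2 : HasDerivAt (fun t : ℝ => (p.1, t)) ((0 : ℝ), (1 : ℝ)) p.2 :=
    (hasDerivAt_const _ _).prodMk (hasDerivAt_id _)
  exact (h1.comp_hasDerivAt p.2 h2).deriv

/-- Chain rule along a curve. -/
lemma chain2 {u : ℝ × ℝ → ℝ} (hu : ContDiff ℝ (⊤ : ℕ∞) u) {X Y : ℝ → ℝ} {X' Y' t : ℝ}
    (hX : HasDerivAt X X' t) (hY : HasDerivAt Y Y' t) :
    HasDerivAt (fun t => u (X t, Y t)) (X' * pdx u (X t, Y t) + Y' * pdy u (X t, Y t)) t := by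
  have hd : DifferentiableAt ℝ u (X t, Y t) := (hu.differentiable (by simp)).differentiableAt
  have h := hd.hasFDerivAt.comp_hasDerivAt t (hX.prodMk hY)
  have e : ((X', Y') : ℝ × ℝ) = X' • ((1 : ℝ), (0 : ℝ)) + Y' • ((0 : ℝ), (1 : ℝ)) := by
    ext <;> simp
  rw [e, map_add, map_smul, map_smul, ← pdx_eq hd, ← pdy_eq hd] at h
  simp only [smul_eq_mul] at h
  exact h

lemma contDiff_pdx {u : ℝ × ℝ → ℝ} (hu : ContDiff ℝ (⊤ : ℕ∞) u) : ContDiff ℝ (⊤ : ℕ∞) (pdx u) := by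
  have : pdx u = fun p => fderiv ℝ u p (1, 0) := by
    funext p; exact pdx_eq (hu.differentiable (by simp)).differentiableAt
  rw [this]
  exact (hu.fderiv_right (m := (⊤ : ℕ∞)) (by simp)).clm_apply contDiff_const

lemma contDiff_pdy {u : ℝ × ℝ → ℝ} (hu : ContDiff ℝ (⊤ : ℕ∞) u) : ContDiff ℝ (⊤ : ℕ∞) (pdy u) := by
  have : pdy u = fun p => fderiv ℝ u p (0, 1) := by
    funext p; exact pdy_eq (hu.differentiable (by simp)).differentiableAt
  rw [this]
  exact (hu.fderiv_right (m := (⊤ : ℕ∞)) (by simp)).clm_apply contDiff_const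

lemma hasDerivAt_x {u : ℝ × ℝ → ℝ} (hu : ContDiff ℝ (⊤ : ℕ∞) u) (x y : ℝ) :
    HasDerivAt (fun t => u (t, y)) (pdx u (x, y)) x := by
  simpa using chain2 hu (hasDerivAt_id x) (hasDerivAt_const x y)

lemma hasDerivAt_y {u : ℝ × ℝ → ℝ} (hu : ContDiff ℝ (⊤ : ℕ∞) u) (x y : ℝ) :
    HasDerivAt (fun t => u (x, t)) (pdy u (x, y)) y := by
  simpa using chain2 hu (hasDerivAt_const y x) (hasDerivAt_id y)

lemma pd_symm {u : ℝ × ℝ → ℝ} (hu : ContDiff ℝ (⊤ : ℕ∞) u) (p : ℝ × ℝ) :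
    pdy (pdx u) p = pdx (pdy u) p := by
  have e1 : pdx u = fun p => fderiv ℝ u p (1, 0) := by
    funext p; exact pdx_eq (hu.differentiable (by simp)).differentiableAt
  have e2 : pdy u = fun p => fderiv ℝ u p (0, 1) := by
    funext p; exact pdy_eq (hu.differentiable (by simp)).differentiableAt
  have hd : DifferentiableAt ℝ (fderiv ℝ u) p :=
    ((hu.fderiv_right (m := (⊤ : ℕ∞)) (by simp)).differentiable (by simp)).differentiableAt
  rw [pdy_eq ((contDiff_pdx hu).differentiable (by simp)).differentiableAt,
    pdx_eq ((contDiff_pdy hu).differentiable (by simp)).differentiableAt, e1, e2]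
  rw [fderiv_clm_apply hd (by fun_prop), fderiv_clm_apply hd (by fun_prop)]
  have hs : IsSymmSndFDerivAt ℝ u p :=
    (hu.contDiffAt (x := p)).isSymmSndFDerivAt (by simp; exact WithTop.coe_le_coe.2 (le_top (a := (2 : ℕ∞))))
  simpa using hs.eq (0, 1) (1, 0)

/-- signed horizontal distance to the rectangle -/
def mm (α x : ℝ) : ℝ := max (x - α) 0 - max (-α - x) 0

/-- indicator of the wings as a function of `x` -/
def chi (α x : ℝ) : ℝ := if α ≤ |x| then 1 else 0

@[fun_prop]
lemma continuous_mm (α : ℝ) : Continuous (mm α) := by unfold mm; fun_prop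

lemma mm_right {α x : ℝ} (hα : 0 < α) (h : α ≤ x) : mm α x = x - α := by
  unfold mm; rw [max_eq_left (by linarith), max_eq_right (by linarith)]; ring
lemma mm_left {α x : ℝ} (hα : 0 < α) (h : x ≤ -α) : mm α x = x + α := by
  unfold mm; rw [max_eq_right (by linarith), max_eq_left (by linarith)]; ring
lemma mm_mid {α x : ℝ} (h1 : -α ≤ x) (h2 : x ≤ α) : mm α x = 0 := by
  unfold mm; rw [max_eq_right (by linarith), max_eq_right (by linarith)]; ring

lemma hasDerivAt_possq (t : ℝ) : HasDerivAt (fun t : ℝ => (max t 0) ^ 2) (2 * max t 0) t := by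
  rcases lt_trichotomy t 0 with h | h | h
  · have : (fun t : ℝ => (max t 0) ^ 2) =ᶠ[nhds t] fun _ => 0 := by
      filter_upwards [Iio_mem_nhds h] with s hs
      rw [max_eq_right (le_of_lt hs)]; simp
    rw [max_eq_right h.le]
    simpa using (hasDerivAt_const t (0 : ℝ)).congr_of_eventuallyEq this
  · subst h
    rw [hasDerivAt_iff_isLittleO]
    simp only [max_self, sub_zero, mul_zero, smul_zero]
    have h1 : (fun x : ℝ => x ^ 2) =o[nhds 0] fun x => x := by
      simpa using (Asymptotics.isLittleO_pow_id (𝕜 := ℝ) (n := 2) (by norm_num))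
    refine Asymptotics.IsBigO.trans_isLittleO ?_ h1
    refine Asymptotics.IsBigO.of_bound 1 (Eventually.of_forall fun x => ?_)
    simp only [Real.norm_eq_abs, one_mul]
    rcases le_total x 0 with hx | hx
    · rw [max_eq_right hx]; simp; positivity
    · rw [max_eq_left hx]; simp
  · have : (fun t : ℝ => (max t 0) ^ 2) =ᶠ[nhds t] fun t => t ^ 2 := by
      filter_upwards [Ioi_mem_nhds h] with s hs
      rw [max_eq_left (le_of_lt hs)]
    rw [max_eq_left h.le]
    simpa using (hasDerivAt_pow 2 t).congr_of_eventuallyEq this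

lemma mm_sq {α : ℝ} (hα : 0 < α) (x : ℝ) :
    mm α x ^ 2 = (max (x - α) 0) ^ 2 + (max (-α - x) 0) ^ 2 := by
  unfold mm
  rcases le_total x α with h | h
  · rw [max_eq_right (by linarith : x - α ≤ 0)]; ring
  · rw [max_eq_right (by linarith : -α - x ≤ 0)]; ring

lemma hasDerivAt_mm_sq {α : ℝ} (hα : 0 < α) (x : ℝ) :
    HasDerivAt (fun x => mm α x ^ 2) (2 * mm α x) x := by
  have e : (fun x => mm α x ^ 2) = fun x => (max (x - α) 0) ^ 2 + (max (-α - x) 0) ^ 2 := by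
    funext x; exact mm_sq hα x
  rw [e]
  have h1 := (hasDerivAt_possq (x - α)).comp x ((hasDerivAt_id x).sub_const α)
  have h2 := (hasDerivAt_possq (-α - x)).comp x ((hasDerivAt_id x).const_sub (-α))
  have := h1.add h2
  have e2 : 2 * mm α x = 2 * max (x - α) 0 * 1 + 2 * max (-α - x) 0 * (-1) := by
    unfold mm; ring
  rw [e2]
  exact this

lemma hasDerivAt_mm {α : ℝ} (hα : 0 < α) {x : ℝ} (h1 : x ≠ α) (h2 : x ≠ -α) :
    HasDerivAt (mm α) (chi α x) x := by
  rcases lt_or_ge α x with h | h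
  · have e : mm α =ᶠ[nhds x] fun x => x - α := by
      filter_upwards [Ioi_mem_nhds h] with s hs
      exact mm_right hα (le_of_lt hs)
    have : chi α x = 1 := by
      unfold chi; rw [if_pos]; exact h.le.trans (le_abs_self x)
    rw [this]
    exact ((hasDerivAt_id x).sub_const α).congr_of_eventuallyEq e
  · have h : x < α := lt_of_le_of_ne h h1
    rcases lt_or_ge x (-α) with h' | h'
    · have e : mm α =ᶠ[nhds x] fun x => x + α := by
        filter_upwards [Iio_mem_nhds h'] with s hs
        exact mm_left hα (le_of_lt hs)
      have : chi α x = 1 := by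
        unfold chi; rw [if_pos]; linarith [neg_le_abs x]
      rw [this]
      exact ((hasDerivAt_id x).add_const α).congr_of_eventuallyEq e
    · have h' : -α < x := lt_of_le_of_ne h' (Ne.symm h2)
      have e : mm α =ᶠ[nhds x] fun x => 0 := by
        filter_upwards [Ioo_mem_nhds h' h] with s hs
        exact mm_mid hs.1.le hs.2.le
      have : chi α x = 0 := by
        unfold chi; rw [if_neg]; rw [not_le, abs_lt]; exact ⟨h', h⟩
      rw [this]
      exact (hasDerivAt_const x (0 : ℝ)).congr_of_eventuallyEq e

lemma chi_nonneg (α x : ℝ) : 0 ≤ chi α x := by unfold chi; split_ifs <;> norm_num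
lemma chi_le_one (α x : ℝ) : chi α x ≤ 1 := by unfold chi; split_ifs <;> norm_num
lemma chi_cases {α : ℝ} (hα : 0 < α) (x : ℝ) :
    (chi α x = 1 ∧ α ≤ x ∧ mm α x = x - α) ∨ (chi α x = 1 ∧ x ≤ -α ∧ mm α x = x + α) ∨
    (chi α x = 0 ∧ -α < x ∧ x < α ∧ mm α x = 0) := by
  by_cases h : α ≤ |x|
  · have c : chi α x = 1 := by unfold chi; rw [if_pos h]
    rcases le_abs.1 h with h | h
    · exact Or.inl ⟨c, h, mm_right hα h⟩
    · exact Or.inr (Or.inl ⟨c, by linarith, mm_left hα (by linarith)⟩)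
  · have c : chi α x = 0 := by unfold chi; rw [if_neg h]
    rw [not_le, abs_lt] at h
    exact Or.inr (Or.inr ⟨c, h.1, h.2, mm_mid h.1.le h.2.le⟩)

@[fun_prop]
lemma measurable_chi (α : ℝ) : Measurable (chi α) := by
  unfold chi
  exact Measurable.ite (measurableSet_le measurable_const (by fun_prop)) measurable_const measurable_const

/-- the stadium -/
lemma stadium_eq {α β : ℝ} (hα : 0 < α) (hβ : 0 < β) :
    Stadium α β = {p | mm α p.1 ^ 2 + p.2 ^ 2 ≤ β ^ 2} := by
  ext ⟨x, y⟩
  simp only [Stadium, Rect, Wings, mem_union, mem_prod, mem_Icc, mem_ofPred_eq]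
  rcases chi_cases hα x with ⟨-, h, e⟩ | ⟨-, h, e⟩ | ⟨-, h, h', e⟩ <;> rw [e]
  · constructor
    · rintro (⟨⟨h1, h2⟩, h3, h4⟩ | h1 | h1)
      · have : x = α := by linarith
        subst this; nlinarith
      · exact h1.1
      · linarith
    · intro h1; exact Or.inr (Or.inl ⟨h1, h⟩)
  · constructor
    · rintro (⟨⟨h1, h2⟩, h3, h4⟩ | h1 | h1)
      · have : x = -α := by linarith
        subst this; nlinarith
      · linarith
      · exact h1.1
    · intro h1; exact Or.inr (Or.inr ⟨h1, h⟩)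
  · constructor
    · rintro (⟨⟨h1, h2⟩, h3, h4⟩ | h1 | h1)
      · nlinarith
      · linarith
      · linarith
    · intro h1
      refine Or.inl ⟨⟨h.le, h'.le⟩, ?_⟩
      exact abs_le.1 (abs_le_of_sq_le_sq (by linarith) hβ.le)

lemma wings_eq {α β : ℝ} (hα : 0 < α) :
    Wings α β = {p | mm α p.1 ^ 2 + p.2 ^ 2 ≤ β ^ 2} ∩ {p | α ≤ |p.1|} := by
  ext ⟨x, y⟩
  simp only [Wings, mem_union, mem_ofPred_eq, mem_inter_iff]
  constructor
  · rintro (⟨h1, h2⟩ | ⟨h1, h2⟩)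
    · rw [mm_right hα h2]; exact ⟨h1, h2.trans (le_abs_self x)⟩
    · rw [mm_left hα h2]; exact ⟨h1, by linarith [neg_le_abs x]⟩
  · rintro ⟨h1, h2⟩
    rcases le_abs.1 h2 with h | h
    · rw [mm_right hα h] at h1; exact Or.inl ⟨h1, h⟩
    · rw [mm_left hα (by linarith)] at h1; exact Or.inr ⟨h1, by linarith⟩

lemma bdry_mem {α β : ℝ} (hα : 0 < α) {p : ℝ × ℝ} (h : mm α p.1 ^ 2 + p.2 ^ 2 = β ^ 2) :
    p ∈ StadiumBoundary α β := by
  obtain ⟨x, y⟩ := p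
  simp only [StadiumBoundary, mem_union, mem_ofPred_eq] at h ⊢
  rcases chi_cases hα x with ⟨-, h1, e⟩ | ⟨-, h1, e⟩ | ⟨-, h1, h2, e⟩ <;> rw [e] at h
  · right; rw [abs_of_nonneg (by linarith)]; exact ⟨h, h1⟩
  · right; rw [abs_of_nonpos (by linarith)]; exact ⟨by linarith, by linarith⟩
  · left; exact ⟨abs_le.2 ⟨h1.le, h2.le⟩, sq_eq_sq_iff_eq_or_eq_neg.1 (by linarith)⟩

lemma mm_slice {α : ℝ} (hα : 0 < α) {r : ℝ} (hr : 0 ≤ r) (x : ℝ) :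
    |mm α x| ≤ r ↔ -(α + r) ≤ x ∧ x ≤ α + r := by
  rw [abs_le]
  rcases chi_cases hα x with ⟨-, h1, e⟩ | ⟨-, h1, e⟩ | ⟨-, h1, h2, e⟩ <;> rw [e] <;>
    constructor <;> rintro ⟨a, b⟩ <;> constructor <;> linarith

/-- the stadium, in our coordinates -/
def St (α β : ℝ) : Set (ℝ × ℝ) := {p | mm α p.1 ^ 2 + p.2 ^ 2 ≤ β ^ 2}

lemma isClosed_St (α β : ℝ) : IsClosed (St α β) := by
  unfold St; exact isClosed_le (by fun_prop) (by fun_prop)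

lemma measurableSet_St (α β : ℝ) : MeasurableSet (St α β) := (isClosed_St α β).measurableSet

lemma St_bounds {α β : ℝ} (hα : 0 < α) (hβ : 0 < β) {p : ℝ × ℝ} (hp : p ∈ St α β) :
    |mm α p.1| ≤ β ∧ |p.1| ≤ α + β ∧ |p.2| ≤ β := by
  have hp : mm α p.1 ^ 2 + p.2 ^ 2 ≤ β ^ 2 := hp
  have h1 : |mm α p.1| ≤ β := abs_le_of_sq_le_sq (by nlinarith [sq_nonneg p.2]) hβ.le
  have h2 : |p.2| ≤ β := abs_le_of_sq_le_sq (by nlinarith [sq_nonneg (mm α p.1)]) hβ.le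
  refine ⟨h1, abs_le.2 ((mm_slice hα hβ.le _).1 h1), h2⟩

lemma isCompact_St {α β : ℝ} (hα : 0 < α) (hβ : 0 < β) : IsCompact (St α β) := by
  refine (((isCompact_Icc (a := -(α + β)) (b := α + β)).prod
    (isCompact_Icc (a := -β) (b := β)))).of_isClosed_subset (isClosed_St α β) ?_
  intro p hp
  obtain ⟨-, h2, h3⟩ := St_bounds hα hβ hp
  exact ⟨abs_le.1 h2, abs_le.1 h3⟩

lemma slice_x {α β : ℝ} (hα : 0 < α) (y : ℝ) (hy : |y| ≤ β) (x : ℝ) :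
    (x, y) ∈ St α β ↔ x ∈ Icc (-(α + √(β ^ 2 - y ^ 2))) (α + √(β ^ 2 - y ^ 2)) := by
  have h0 : 0 ≤ β ^ 2 - y ^ 2 := by
    have := sq_le_sq' (abs_le.1 hy).1 (abs_le.1 hy).2; linarith
  rw [mem_Icc, ← mm_slice hα (sqrt_nonneg _), Real.le_sqrt (abs_nonneg _) h0, sq_abs]
  show mm α x ^ 2 + y ^ 2 ≤ β ^ 2 ↔ _
  constructor <;> intro h <;> linarith

lemma slice_y {α β : ℝ} (hα : 0 < α) (hβ : 0 < β) (x : ℝ) (hx : x ∈ Icc (-(α + β)) (α + β)) (y : ℝ) :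
    (x, y) ∈ St α β ↔ y ∈ Icc (-√(β ^ 2 - mm α x ^ 2)) (√(β ^ 2 - mm α x ^ 2)) := by
  have h0 : 0 ≤ β ^ 2 - mm α x ^ 2 := by
    have h := (mm_slice hα hβ.le x).2 hx
    have := sq_le_sq' (abs_le.1 h).1 (abs_le.1 h).2; linarith
  rw [mem_Icc, ← abs_le, Real.le_sqrt (abs_nonneg _) h0, sq_abs]
  show mm α x ^ 2 + y ^ 2 ≤ β ^ 2 ↔ _
  constructor <;> intro h <;> linarith

lemma divX {α β : ℝ} (hα : 0 < α) (hβ : 0 < β) {F D : ℝ × ℝ → ℝ} (hF : Continuous F)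
    (h0 : ∀ p : ℝ × ℝ, mm α p.1 ^ 2 + p.2 ^ 2 = β ^ 2 → F p = 0)
    {s : Set ℝ} (hs : s.Countable)
    (hd : ∀ x y, x ∉ s → HasDerivAt (fun t => F (t, y)) (D (x, y)) x)
    (hi : IntegrableOn D (St α β)) : ∫ p in St α β, D p = 0 := by
  rw [← integral_indicator (measurableSet_St α β)]
  have hi' : Integrable ((St α β).indicator D) := hi.integrable_indicator (measurableSet_St α β)
  rw [Measure.volume_eq_prod] at hi' ⊢
  rw [integral_prod_symm _ hi']
  have : ∀ᵐ y : ℝ, (∫ x, (St α β).indicator D (x, y)) = 0 := by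
    filter_upwards [hi'.prod_left_ae] with y hy
    by_cases hyb : |y| ≤ β
    · set X := α + √(β ^ 2 - y ^ 2) with hX
      have hX0 : 0 ≤ X := by positivity
      have e : (fun x => (St α β).indicator D (x, y)) = (Icc (-X) X).indicator (fun x => D (x, y)) := by
        funext x
        by_cases h : (x, y) ∈ St α β
        · rw [indicator_of_mem h, indicator_of_mem ((slice_x hα y hyb x).1 h)]
        · rw [indicator_of_notMem h, indicator_of_notMem (fun h' => h ((slice_x hα y hyb x).2 h'))]
      rw [e] at hy ⊢
      rw [integrable_indicator_iff measurableSet_Icc] at hy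
      rw [integral_indicator measurableSet_Icc, integral_Icc_eq_integral_Ioc,
        ← intervalIntegral.integral_of_le (by linarith)]
      rw [integral_eq_of_hasDerivAt_off_countable_of_le (fun t => F (t, y)) (fun t => D (t, y))
        (by linarith) hs (by fun_prop) (fun x hx => hd x y hx.2)
        ((intervalIntegrable_iff_integrableOn_Icc_of_le (by linarith)).2 hy)]
      have h00 : 0 ≤ β ^ 2 - y ^ 2 := by
        have := sq_le_sq' (abs_le.1 hyb).1 (abs_le.1 hyb).2; linarith
      rw [h0 (X, y), h0 (-X, y), sub_zero]
      · show mm α (-X) ^ 2 + y ^ 2 = β ^ 2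
        rw [mm_left hα (by have := sqrt_nonneg (β ^ 2 - y ^ 2); linarith), hX]
        have := sq_sqrt h00
        ring_nf at this ⊢; linarith
      · show mm α X ^ 2 + y ^ 2 = β ^ 2
        rw [mm_right hα (by have := sqrt_nonneg (β ^ 2 - y ^ 2); linarith), hX]
        have := sq_sqrt h00
        ring_nf at this ⊢; linarith
    · have e : (fun x => (St α β).indicator D (x, y)) = fun _ => 0 := by
        funext x
        rw [indicator_of_notMem]
        intro h
        exact hyb (St_bounds hα hβ h).2.2
      rw [e]; simp
  rw [integral_congr_ae this]; simp

lemma divY {α β : ℝ} (hα : 0 < α) (hβ : 0 < β) {F D : ℝ × ℝ → ℝ} (hF : ∀ x, Continuous fun y => F (x, y))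
    (h0 : ∀ p : ℝ × ℝ, mm α p.1 ^ 2 + p.2 ^ 2 = β ^ 2 → F p = 0)
    (hd : ∀ x y, HasDerivAt (fun t => F (x, t)) (D (x, y)) y)
    (hi : IntegrableOn D (St α β)) : ∫ p in St α β, D p = 0 := by
  rw [← integral_indicator (measurableSet_St α β)]
  have hi' : Integrable ((St α β).indicator D) := hi.integrable_indicator (measurableSet_St α β)
  rw [Measure.volume_eq_prod] at hi' ⊢
  rw [integral_prod _ hi']
  have : ∀ᵐ x : ℝ, (∫ y, (St α β).indicator D (x, y)) = 0 := by
    filter_upwards [hi'.prod_right_ae] with x hx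
    by_cases hxb : x ∈ Icc (-(α + β)) (α + β)
    · set X := √(β ^ 2 - mm α x ^ 2) with hX
      have hX0 : 0 ≤ X := by positivity
      have e : (fun y => (St α β).indicator D (x, y)) = (Icc (-X) X).indicator (fun y => D (x, y)) := by
        funext y
        by_cases h : (x, y) ∈ St α β
        · rw [indicator_of_mem h, indicator_of_mem ((slice_y hα hβ x hxb y).1 h)]
        · rw [indicator_of_notMem h, indicator_of_notMem (fun h' => h ((slice_y hα hβ x hxb y).2 h'))]
      rw [e] at hx ⊢
      rw [integrable_indicator_iff measurableSet_Icc] at hx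
      rw [integral_indicator measurableSet_Icc, integral_Icc_eq_integral_Ioc,
        ← intervalIntegral.integral_of_le (by linarith)]
      rw [intervalIntegral.integral_eq_sub_of_hasDerivAt_of_le
        (by linarith) (hF x).continuousOn (fun y _ => hd x y)
        ((intervalIntegrable_iff_integrableOn_Icc_of_le (by linarith)).2 hx)]
      have h00 : 0 ≤ β ^ 2 - mm α x ^ 2 := by
        have h := (mm_slice hα hβ.le x).2 hxb
        have := sq_le_sq' (abs_le.1 h).1 (abs_le.1 h).2; linarith
      rw [h0 (x, X), h0 (x, -X), sub_zero]
      · show mm α x ^ 2 + (-X) ^ 2 = β ^ 2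
        have := sq_sqrt h00
        rw [neg_sq, hX]; linarith
      · show mm α x ^ 2 + (X) ^ 2 = β ^ 2
        have := sq_sqrt h00
        rw [hX]; linarith
    · have e : (fun y => (St α β).indicator D (x, y)) = fun _ => 0 := by
        funext y
        rw [indicator_of_notMem]
        intro h
        exact hxb (abs_le.1 (St_bounds hα hβ h).2.1)
      rw [e]; simp
  rw [integral_congr_ae this]; simp

lemma integral_St {α β : ℝ} (hα : 0 < α) (hβ : 0 < β) {D : ℝ × ℝ → ℝ} (hD : Continuous D) :
    ∫ p in St α β, D p = ∫ x in (-(α + β))..(α + β), ∫ t in (-1 : ℝ)..1,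
      D (x, √(β ^ 2 - mm α x ^ 2) * t) * √(β ^ 2 - mm α x ^ 2) := by
  have hi : IntegrableOn D (St α β) := hD.continuousOn.integrableOn_compact (isCompact_St hα hβ)
  rw [← integral_indicator (measurableSet_St α β)]
  have hi' : Integrable ((St α β).indicator D) := hi.integrable_indicator (measurableSet_St α β)
  rw [Measure.volume_eq_prod] at hi' ⊢
  rw [integral_prod _ hi', intervalIntegral.integral_of_le (by linarith),
    ← integral_Icc_eq_integral_Ioc, ← integral_indicator measurableSet_Icc]
  congr 1
  funext x
  by_cases hxb : x ∈ Icc (-(α + β)) (α + β)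
  · rw [indicator_of_mem hxb]
    set X := √(β ^ 2 - mm α x ^ 2) with hX
    have hX0 : 0 ≤ X := by positivity
    have e : (fun y => (St α β).indicator D (x, y)) = (Icc (-X) X).indicator (fun y => D (x, y)) := by
      funext y
      by_cases h : (x, y) ∈ St α β
      · rw [indicator_of_mem h, indicator_of_mem ((slice_y hα hβ x hxb y).1 h)]
      · rw [indicator_of_notMem h, indicator_of_notMem (fun h' => h ((slice_y hα hβ x hxb y).2 h'))]
    rw [e, integral_indicator measurableSet_Icc, integral_Icc_eq_integral_Ioc,
        ← intervalIntegral.integral_of_le (by linarith), intervalIntegral.integral_mul_const,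
        mul_comm, intervalIntegral.mul_integral_comp_mul_left (f := fun y => D (x, y))]
    simp
  · rw [indicator_of_notMem hxb]
    have e : (fun y => (St α β).indicator D (x, y)) = fun _ => 0 := by
      funext y
      rw [indicator_of_notMem]
      intro h
      exact hxb (abs_le.1 (St_bounds hα hβ h).2.1)
    rw [e]; simp

lemma hasDerivAt_h {α β : ℝ} (hα : 0 < α) (hβ : 0 < β) {x : ℝ} (hx : x ∈ Ioo (-(α + β)) (α + β)) :
    0 < β ^ 2 - mm α x ^ 2 ∧ HasDerivAt (fun x => √(β ^ 2 - mm α x ^ 2))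
      (-mm α x / √(β ^ 2 - mm α x ^ 2)) x := by
  have h : |mm α x| < β := by
    rw [abs_lt]
    rcases chi_cases hα x with ⟨-, h1, e⟩ | ⟨-, h1, e⟩ | ⟨-, h1, h2, e⟩ <;> rw [e] <;>
      constructor <;> linarith [hx.1, hx.2]
  have h0 : 0 < β ^ 2 - mm α x ^ 2 := by
    have := sq_lt_sq' (abs_lt.1 h).1 (abs_lt.1 h).2; linarith
  refine ⟨h0, ?_⟩
  have := ((hasDerivAt_mm_sq hα x).const_sub (β ^ 2)).sqrt h0.ne'
  have e2 : -mm α x / √(β ^ 2 - mm α x ^ 2) = -(2 * mm α x) / (2 * √(β ^ 2 - mm α x ^ 2)) := by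
    rw [← mul_neg, mul_div_mul_left _ _ two_ne_zero]
  rw [e2]; exact this

/-- the tangential vector field `(aa, - cc * y)` -/
def aa (α β x : ℝ) : ℝ := x - x * mm α x ^ 2 / β ^ 2
def aa' (α β x : ℝ) : ℝ := 1 - mm α x ^ 2 / β ^ 2 - 2 * x * mm α x / β ^ 2
def cc (α β x : ℝ) : ℝ := x * mm α x / β ^ 2

@[fun_prop]
lemma continuous_aa (α β : ℝ) : Continuous (aa α β) := by unfold aa; fun_prop
@[fun_prop]
lemma continuous_aa' (α β : ℝ) : Continuous (aa' α β) := by unfold aa'; fun_prop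
@[fun_prop]
lemma continuous_cc (α β : ℝ) : Continuous (cc α β) := by unfold cc; fun_prop

lemma hasDerivAt_aa {α : ℝ} (β : ℝ) (hα : 0 < α) (x : ℝ) : HasDerivAt (aa α β) (aa' α β x) x := by
  have h := (hasDerivAt_id x).sub (((hasDerivAt_id x).mul (hasDerivAt_mm_sq hα x)).div_const (β ^ 2))
  have e : aa' α β x = 1 - (1 * mm α x ^ 2 + id x * (2 * mm α x)) / β ^ 2 := by
    unfold aa'; simp only [id]; ring
  rw [e]; exact h

lemma divT {α β : ℝ} (hα : 0 < α) (hβ : 0 < β) {g : ℝ × ℝ → ℝ} (hg : ContDiff ℝ (⊤ : ℕ∞) g) :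
    ∫ p in St α β, ((aa' α β p.1 - cc α β p.1) * g p + aa α β p.1 * pdx g p
      - cc α β p.1 * p.2 * pdy g p) = 0 := by
  have hgx := (contDiff_pdx hg).continuous
  have hgy := (contDiff_pdy hg).continuous
  have hgc := hg.continuous
  rw [integral_St hα hβ (by fun_prop)]
  rw [intervalIntegral_intervalIntegral_swap]
  · have : ∀ t : ℝ, ∫ x in (-(α + β))..(α + β), (((aa' α β x - cc α β x) *
        g (x, √(β ^ 2 - mm α x ^ 2) * t) + aa α β x * pdx g (x, √(β ^ 2 - mm α x ^ 2) * t)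
        - cc α β x * (√(β ^ 2 - mm α x ^ 2) * t) * pdy g (x, √(β ^ 2 - mm α x ^ 2) * t)) *
          √(β ^ 2 - mm α x ^ 2)) = 0 := by
      intro t
      rw [intervalIntegral.integral_eq_sub_of_hasDerivAt_of_le
        (f := fun x => aa α β x * √(β ^ 2 - mm α x ^ 2) * g (x, √(β ^ 2 - mm α x ^ 2) * t))
        (by linarith) (by fun_prop)]
      · have e1 : mm α (α + β) = β := by rw [mm_right hα (by linarith)]; ring
        have e2 : mm α (-(α + β)) = -β := by rw [mm_left hα (by linarith)]; ring
        rw [e1, e2]; simp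
      · intro x hx
        obtain ⟨h0, hd⟩ := hasDerivAt_h hα hβ hx
        have hs := Real.sqrt_pos.2 h0
        have hq := sq_sqrt h0.le
        have key := ((hasDerivAt_aa β hα x).mul hd).mul (chain2 hg (hasDerivAt_id x) (hd.mul_const t))
        refine key.congr_deriv ?_
        simp only [id, one_mul, Pi.mul_apply]
        set s := √(β ^ 2 - mm α x ^ 2) with hsd
        generalize g (x, s * t) = G
        generalize pdx g (x, s * t) = Gx
        generalize pdy g (x, s * t) = Gy
        have ha : aa α β x = x * s ^ 2 / β ^ 2 := by
          rw [hq]; unfold aa; field_simp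
        have hc : cc α β x * s = aa α β x * (mm α x / s) := by
          rw [ha]; unfold cc; field_simp
        have hc' : cc α β x  = aa α β x * (mm α x / s) / s := by
          rw [← hc]; field_simp
        rw [hc']
        field_simp
        ring
      · exact Continuous.intervalIntegrable (by fun_prop) _ _
    rw [intervalIntegral.integral_congr (g := fun _ => 0) (fun t _ => this t)]
    simp
  · have : Continuous (Function.uncurry fun x t => (((aa' α β x - cc α β x) *
        g (x, √(β ^ 2 - mm α x ^ 2) * t) + aa α β x * pdx g (x, √(β ^ 2 - mm α x ^ 2) * t)
        - cc α β x * (√(β ^ 2 - mm α x ^ 2) * t) * pdy g (x, √(β ^ 2 - mm α x ^ 2) * t)) *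
          √(β ^ 2 - mm α x ^ 2))) := by
      unfold Function.uncurry; fun_prop
    refine (this.continuousOn.integrableOn_compact
      ((isCompact_uIcc (a := -(α + β)) (b := α + β)).prod (isCompact_uIcc (a := (-1 : ℝ)) (b := 1)))).mono_set ?_
    exact prod_mono uIoc_subset_uIcc uIoc_subset_uIcc

/-- the tangential derivative vanishes on the boundary -/
lemma tang_zero {α β : ℝ} (hα : 0 < α) (hβ : 0 < β) {u : ℝ × ℝ → ℝ} (hu : ContDiff ℝ (⊤ : ℕ∞) u)
    (h0 : ∀ p : ℝ × ℝ, mm α p.1 ^ 2 + p.2 ^ 2 = β ^ 2 → u p = 0) (p : ℝ × ℝ)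
    (hp : mm α p.1 ^ 2 + p.2 ^ 2 = β ^ 2) :
    aa α β p.1 * pdx u p - cc α β p.1 * p.2 * pdy u p = 0 := by
  obtain ⟨x, y⟩ := p
  simp only at hp ⊢
  have ha : aa α β x = x * y ^ 2 / β ^ 2 := by
    have : mm α x ^ 2 = β ^ 2 - y ^ 2 := by linarith
    unfold aa; rw [this]; field_simp; ring
  by_cases hy : y = 0
  · rw [ha, hy]; simp
  have hx : x ∈ Ioo (-(α + β)) (α + β) := by
    have h1 : 0 < y ^ 2 := by positivity
    have h2 : |mm α x| < β := abs_lt_of_sq_lt_sq (by linarith) hβ.le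
    rw [abs_lt] at h2
    rcases chi_cases hα x with ⟨-, h1, e⟩ | ⟨-, h1, e⟩ | ⟨-, h1, h3, e⟩ <;> rw [e] at h2 <;>
      constructor <;> linarith [h2.1, h2.2]
  obtain ⟨hpos, hd⟩ := hasDerivAt_h hα hβ hx
  have hs := Real.sqrt_pos.2 hpos
  have hq := sq_sqrt hpos.le
  obtain ⟨σ, hσ, hyσ⟩ : ∃ σ : ℝ, σ ^ 2 = 1 ∧ y = √(β ^ 2 - mm α x ^ 2) * σ := by
    have : y ^ 2 = √(β ^ 2 - mm α x ^ 2) ^ 2 := by rw [hq]; linarith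
    rcases sq_eq_sq_iff_eq_or_eq_neg.1 this with h | h
    · exact ⟨1, by norm_num, by linarith⟩
    · exact ⟨-1, by norm_num, by linarith⟩
  have h1 := chain2 hu (hasDerivAt_id x) (hd.mul_const σ)
  have h2 : (fun t => u (id t, √(β ^ 2 - mm α t ^ 2) * σ)) =ᶠ[nhds x] fun _ => 0 := by
    filter_upwards [Ioo_mem_nhds hx.1 hx.2] with t ht
    obtain ⟨hpos', -⟩ := hasDerivAt_h hα hβ ht
    apply h0
    simp only [id]
    rw [mul_pow, sq_sqrt hpos'.le, hσ]; ring
  have h3 := h1.unique ((hasDerivAt_const x (0 : ℝ)).congr_of_eventuallyEq h2)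
  simp only [id, ← hyσ, one_mul] at h3
  rw [ha]
  unfold cc
  have h4 : y * pdx u (x, y) - mm α x * pdy u (x, y) = 0 := by
    have h5 : y * (-mm α x / √(β ^ 2 - mm α x ^ 2) * σ) = - mm α x := by
      rw [hyσ]; field_simp; rw [hσ]; ring
    linear_combination y * h3 - pdy u (x, y) * h5
  linear_combination (x * y / β ^ 2) * h4

lemma intOn {α β : ℝ} (hα : 0 < α) (hβ : 0 < β) {k : ℝ → ℝ} (hk : Measurable k) {C : ℝ}
    (hb : ∀ p ∈ St α β, |k p.1| ≤ C) {D : ℝ × ℝ → ℝ} (hD : Continuous D) :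
    IntegrableOn (fun p => k p.1 * D p) (St α β) := by
  have hi : IntegrableOn D (St α β) := hD.continuousOn.integrableOn_compact (isCompact_St hα hβ)
  refine Integrable.bdd_mul (c := C) hi (hk.comp measurable_fst).aestronglyMeasurable ?_
  filter_upwards [ae_restrict_mem (measurableSet_St α β)] with p hp
  exact hb p hp

lemma intOnC {α β : ℝ} (hα : 0 < α) (hβ : 0 < β) {D : ℝ × ℝ → ℝ} (hD : Continuous D) :
    IntegrableOn D (St α β) := hD.continuousOn.integrableOn_compact (isCompact_St hα hβ)

lemma energy {α β : ℝ} (hα : 0 < α) (hβ : 0 < β) {u : ℝ × ℝ → ℝ} (hu : ContDiff ℝ (⊤ : ℕ∞) u)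
    (h0 : ∀ p : ℝ × ℝ, mm α p.1 ^ 2 + p.2 ^ 2 = β ^ 2 → u p = 0)
    {φ φ' : ℝ → ℝ} (hφ : Continuous φ) (hφ' : Measurable φ') {C : ℝ}
    (hb : ∀ p ∈ St α β, |φ' p.1| ≤ C) {s : Set ℝ} (hs : s.Countable)
    (hd : ∀ x, x ∉ s → HasDerivAt φ (φ' x) x) :
    IntegrableOn (fun p => φ' p.1 * (u p * pdx u p) + φ p.1 * (pdx u p ^ 2 + pdy u p ^ 2
      + u p * (pdx (pdx u) p + pdy (pdy u) p))) (St α β) ∧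
    ∫ p in St α β, (φ' p.1 * (u p * pdx u p) + φ p.1 * (pdx u p ^ 2 + pdy u p ^ 2
      + u p * (pdx (pdx u) p + pdy (pdy u) p))) = 0 := by
  have c0 := hu.continuous
  have hux := contDiff_pdx hu
  have huy := contDiff_pdy hu
  have c1 := hux.continuous
  have c2 := huy.continuous
  have c3 := (contDiff_pdx hux).continuous
  have c4 := (contDiff_pdy huy).continuous
  have i1 : IntegrableOn (fun p : ℝ × ℝ => φ' p.1 * (u p * pdx u p) +
      φ p.1 * (pdx u p ^ 2 + u p * pdx (pdx u) p)) (St α β) :=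
    (intOn hα hβ hφ' hb (D := fun p => u p * pdx u p) (by fun_prop)).add
      (intOnC hα hβ (D := fun p => φ p.1 * (pdx u p ^ 2 + u p * pdx (pdx u) p)) (by fun_prop))
  have i2 : IntegrableOn (fun p : ℝ × ℝ => φ p.1 * (pdy u p ^ 2 + u p * pdy (pdy u) p)) (St α β) :=
    intOnC hα hβ (by fun_prop)
  have e1 := divX hα hβ (F := fun p => φ p.1 * (u p * pdx u p)) (by fun_prop)
    (fun p hp => by simp only [h0 p hp]; ring) hs
    (fun x y hx => by
      refine ((hd x hx).mul ((hasDerivAt_x hu x y).mul (hasDerivAt_x hux x y))).congr_deriv ?_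
      show _ = φ' x * (u (x, y) * pdx u (x, y)) + φ x * (pdx u (x, y) ^ 2 + u (x, y) * pdx (pdx u) (x, y))
      simp only [Pi.mul_apply]
      ring) i1
  have e2 := divY hα hβ (F := fun p => φ p.1 * (u p * pdy u p)) (fun x => by fun_prop)
    (fun p hp => by simp only [h0 p hp]; ring)
    (fun x y => by
      refine (((hasDerivAt_y hu x y).mul (hasDerivAt_y huy x y)).const_mul (φ x)).congr_deriv ?_
      show _ = φ x * (pdy u (x, y) ^ 2 + u (x, y) * pdy (pdy u) (x, y))
      ring) i2
  have e : (fun p => φ' p.1 * (u p * pdx u p) + φ p.1 * (pdx u p ^ 2 + pdy u p ^ 2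
      + u p * (pdx (pdx u) p + pdy (pdy u) p))) = fun p => (φ' p.1 * (u p * pdx u p) +
      φ p.1 * (pdx u p ^ 2 + u p * pdx (pdx u) p)) + (φ p.1 * (pdy u p ^ 2 + u p * pdy (pdy u) p)) := by
    funext p; ring
  rw [e]
  refine ⟨i1.add i2, ?_⟩
  rw [integral_add i1 i2, e1, e2, add_zero]

lemma weightX {α β : ℝ} (hα : 0 < α) (hβ : 0 < β) {u : ℝ × ℝ → ℝ} (hu : ContDiff ℝ (⊤ : ℕ∞) u)
    (h0 : ∀ p : ℝ × ℝ, mm α p.1 ^ 2 + p.2 ^ 2 = β ^ 2 → u p = 0)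
    {φ φ' : ℝ → ℝ} (hφ : Continuous φ) (hφ' : Measurable φ') {C : ℝ}
    (hb : ∀ p ∈ St α β, |φ' p.1| ≤ C) {s : Set ℝ} (hs : s.Countable)
    (hd : ∀ x, x ∉ s → HasDerivAt φ (φ' x) x) :
    IntegrableOn (fun p => φ' p.1 * u p ^ 2 + φ p.1 * (2 * u p * pdx u p)) (St α β) ∧
    ∫ p in St α β, (φ' p.1 * u p ^ 2 + φ p.1 * (2 * u p * pdx u p)) = 0 := by
  have c0 := hu.continuous
  have hux := contDiff_pdx hu
  have c1 := hux.continuous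
  have i1 : IntegrableOn (fun p => φ' p.1 * u p ^ 2 + φ p.1 * (2 * u p * pdx u p)) (St α β) :=
    (intOn hα hβ hφ' hb (D := fun p => u p ^ 2) (by fun_prop)).add
      (intOnC hα hβ (D := fun p => φ p.1 * (2 * u p * pdx u p)) (by fun_prop))
  refine ⟨i1, divX hα hβ (F := fun p => φ p.1 * (u p ^ 2)) (by fun_prop)
    (fun p hp => by simp only [h0 p hp]; ring) hs
    (fun x y hx => by
      refine ((hd x hx).mul ((hasDerivAt_x hu x y).pow 2)).congr_deriv ?_
      show _ = φ' x * u (x, y) ^ 2 + φ x * (2 * u (x, y) * pdx u (x, y))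
      simp only [Pi.pow_apply]
      ring) i1⟩

/-- derivative of `cc` -/
def cc' (α β x : ℝ) : ℝ := (mm α x + x * chi α x) / β ^ 2
/-- derivative of `aa' - cc` -/
def ff' (α β x : ℝ) : ℝ := -(2 * mm α x) / β ^ 2 - 3 * cc' α β x

@[fun_prop]
lemma measurable_cc' (α β : ℝ) : Measurable (cc' α β) := by
  have := (continuous_mm α).measurable
  unfold cc'; fun_prop
@[fun_prop]
lemma measurable_ff' (α β : ℝ) : Measurable (ff' α β) := by
  have := (continuous_mm α).measurable
  unfold ff'; fun_prop

lemma hasDerivAt_cc {α : ℝ} (β : ℝ) (hα : 0 < α) {x : ℝ} (hx : x ∉ ({α, -α} : Set ℝ)) :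
    HasDerivAt (cc α β) (cc' α β x) x := by
  simp only [mem_insert_iff, mem_singleton_iff, not_or] at hx
  have h := ((hasDerivAt_id x).mul (hasDerivAt_mm hα hx.1 hx.2)).div_const (β ^ 2)
  refine h.congr_deriv ?_
  unfold cc'; simp only [id]; ring

lemma hasDerivAt_ff {α : ℝ} (β : ℝ) (hα : 0 < α) {x : ℝ} (hx : x ∉ ({α, -α} : Set ℝ)) :
    HasDerivAt (fun x => aa' α β x - cc α β x) (ff' α β x) x := by
  have h := ((hasDerivAt_mm_sq hα x).div_const (β ^ 2)).const_sub 1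
  have h2 := h.sub ((hasDerivAt_cc β hα hx).const_mul 3)
  have e : (fun x => aa' α β x - cc α β x) = fun x => 1 - mm α x ^ 2 / β ^ 2 - 3 * cc α β x := by
    funext x; unfold aa' cc; ring
  rw [e]
  refine h2.congr_deriv ?_
  unfold ff'; ring

lemma mm_chi {α : ℝ} (hα : 0 < α) (x : ℝ) : mm α x * chi α x = mm α x := by
  rcases chi_cases hα x with ⟨h, h1, e⟩ | ⟨h, h1, e⟩ | ⟨h, h1, h2, e⟩ <;> rw [h, e] <;> ring

lemma coef_bounds {α β : ℝ} (hα : 0 < α) (hβ : 0 < β) : ∃ D : ℝ, 1 ≤ D ∧ ∀ p ∈ St α β,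
    1 - aa' α β p.1 ≤ D * chi α p.1 ∧ |cc α β p.1| ≤ D * chi α p.1 ∧
    |cc' α β p.1| ≤ D * chi α p.1 ∧ |p.2 * cc' α β p.1| ≤ D * chi α p.1 ∧
    |ff' α β p.1| ≤ D * chi α p.1 ∧ |aa' α β p.1 - cc α β p.1| ≤ D ∧ |aa α β p.1| ≤ D ∧
    |cc α β p.1 * p.2| ≤ D * chi α p.1 := by
  set L := α + β with hL
  have hLp : 0 < L := by positivity
  -- a bound for each quantity
  obtain ⟨D, hD⟩ : ∃ D : ℝ, D = 2 + 3 * L / β + (L + β) / β ^ 2 + (L + β) / β + L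
    + (2 * β + 3 * (L + β)) / β ^ 2 + L := ⟨_, rfl⟩
  have p1 : 0 ≤ L / β := by positivity
  have p2 : 0 ≤ (L + β) / β ^ 2 := by positivity
  have p3 : 0 ≤ (L + β) / β := by positivity
  have p4 : 0 ≤ (2 * β + 3 * (L + β)) / β ^ 2 := by positivity
  have p1' : 3 * L / β = 3 * (L / β) := by ring
  have p5 : (2 * β + 3 * (L + β)) / β ^ 2 = 2 * β / β ^ 2 + 3 * ((L + β) / β ^ 2) := by ring
  refine ⟨D, by linarith, fun p hp => ?_⟩
  obtain ⟨hm, hx, hy⟩ := St_bounds hα hβ hp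
  rw [← hL] at hx
  have hb2 : 0 < β ^ 2 := by positivity
  have hmsq : mm α p.1 ^ 2 / β ^ 2 ≤ 1 := by
    rw [div_le_one hb2, ← sq_abs]; exact pow_le_pow_left₀ (abs_nonneg _) hm 2
  have hmsq0 : 0 ≤ mm α p.1 ^ 2 / β ^ 2 := by positivity
  have hcc : |cc α β p.1| ≤ L / β := by
    unfold cc
    rw [abs_div, abs_mul, abs_of_pos hb2, div_le_div_iff₀ hb2 hβ]
    have : |p.1| * |mm α p.1| ≤ L * β := by gcongr
    nlinarith
  have hcc' : |cc' α β p.1| ≤ (L + β) / β ^ 2 := by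
    unfold cc'
    rw [abs_div, abs_of_pos hb2]
    gcongr
    refine (abs_add_le _ _).trans ?_
    rw [abs_mul, abs_of_nonneg (chi_nonneg α p.1)]
    have : |p.1| * chi α p.1 ≤ L * 1 := by
      have := chi_le_one α p.1
      have := chi_nonneg α p.1
      gcongr
    linarith
  have hycc' : |p.2 * cc' α β p.1| ≤ (L + β) / β := by
    rw [abs_mul]
    calc |p.2| * |cc' α β p.1| ≤ β * ((L + β) / β ^ 2) := by gcongr
      _ = (L + β) / β := by field_simp
  have hff : |ff' α β p.1| ≤ (2 * β + 3 * (L + β)) / β ^ 2 := by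
    unfold ff'
    rw [p5]
    refine (abs_sub _ _).trans ?_
    gcongr
    · rw [abs_div, abs_neg, abs_mul, abs_of_pos hb2, abs_two]; gcongr
    · rw [abs_mul]; simp only [Nat.abs_ofNat]; gcongr
  have hac : |aa' α β p.1 - cc α β p.1| ≤ 1 + 3 * (L / β) := by
    have e : aa' α β p.1 - cc α β p.1 = (1 - mm α p.1 ^ 2 / β ^ 2) - 3 * cc α β p.1 := by
      unfold aa' cc; ring
    rw [e]
    refine (abs_sub _ _).trans ?_
    rw [abs_mul]; simp only [Nat.abs_ofNat]
    gcongr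
    rw [abs_of_nonneg (by linarith)]; linarith
  have ha : |aa α β p.1| ≤ L := by
    have e : aa α β p.1 = p.1 * (1 - mm α p.1 ^ 2 / β ^ 2) := by unfold aa; ring
    rw [e, abs_mul]
    calc _ ≤ L * 1 := by
          gcongr
          rw [abs_of_nonneg (by linarith)]; linarith
      _ = L := by ring
  have hcy : |cc α β p.1 * p.2| ≤ L := by
    rw [abs_mul]
    calc _ ≤ (L / β) * β := by gcongr
      _ = L := by field_simp
  have h1a : 1 - aa' α β p.1 ≤ 1 + 2 * (L / β) := by
    have e : aa' α β p.1 = 1 - mm α p.1 ^ 2 / β ^ 2 - 2 * cc α β p.1 := by unfold aa' cc; ring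
    rw [e]
    have := abs_le.1 hcc
    linarith [this.2]
  rcases chi_cases hα p.1 with ⟨h, -, -⟩ | ⟨h, -, -⟩ | ⟨h, -, -, e⟩
  · rw [h, mul_one]
    refine ⟨?_, ?_, ?_, ?_, ?_, ?_, ?_, ?_⟩ <;> linarith
  · rw [h, mul_one]
    refine ⟨?_, ?_, ?_, ?_, ?_, ?_, ?_, ?_⟩ <;> linarith
  · have z1 : cc α β p.1 = 0 := by unfold cc; rw [e]; simp
    have z2 : cc' α β p.1 = 0 := by unfold cc'; rw [e, h]; simp
    have z3 : ff' α β p.1 = 0 := by unfold ff'; rw [e, z2]; simp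
    have z4 : aa' α β p.1 = 1 := by unfold aa'; rw [e]; simp
    rw [h, z2, z3]
    refine ⟨?_, ?_, ?_, ?_, ?_, ?_, ?_, ?_⟩
    · rw [z4]; simp
    · rw [z1]; simp
    · simp
    · simp
    · simp
    · linarith
    · linarith
    · rw [z1]; simp

lemma rellich {α β : ℝ} (hα : 0 < α) (hβ : 0 < β) {u : ℝ × ℝ → ℝ} (hu : ContDiff ℝ (⊤ : ℕ∞) u)
    (h0 : ∀ p : ℝ × ℝ, mm α p.1 ^ 2 + p.2 ^ 2 = β ^ 2 → u p = 0) (l : ℝ) :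
    IntegrableOn (fun p => aa' α β p.1 * pdx u p ^ 2 - p.2 * cc' α β p.1 * (pdx u p * pdy u p)
      - cc α β p.1 * pdy u p ^ 2
      - (lap u p - l ^ 2 * u p) * (aa α β p.1 * pdx u p - cc α β p.1 * p.2 * pdy u p)
      + 1 / 2 * ff' α β p.1 * (u p * pdx u p)
      - 1 / 2 * (aa' α β p.1 - cc α β p.1) * (u p * (lap u p - l ^ 2 * u p))) (St α β) ∧
    ∫ p in St α β, (aa' α β p.1 * pdx u p ^ 2 - p.2 * cc' α β p.1 * (pdx u p * pdy u p)
      - cc α β p.1 * pdy u p ^ 2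
      - (lap u p - l ^ 2 * u p) * (aa α β p.1 * pdx u p - cc α β p.1 * p.2 * pdy u p)
      + 1 / 2 * ff' α β p.1 * (u p * pdx u p)
      - 1 / 2 * (aa' α β p.1 - cc α β p.1) * (u p * (lap u p - l ^ 2 * u p))) = 0 := by
  obtain ⟨D, hD1, hD⟩ := coef_bounds hα hβ
  have bcc : ∀ p ∈ St α β, |cc' α β p.1| ≤ D := fun p hp =>
    (hD p hp).2.2.1.trans (by nlinarith [chi_le_one α p.1])
  have bff : ∀ p ∈ St α β, |ff' α β p.1| ≤ D := fun p hp =>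
    (hD p hp).2.2.2.2.1.trans (by nlinarith [chi_le_one α p.1])
  have hs : ({α, -α} : Set ℝ).Countable := (Set.toFinite _).countable
  have c0 := hu.continuous
  have hux := contDiff_pdx hu
  have huy := contDiff_pdy hu
  have c1 := hux.continuous
  have c2 := huy.continuous
  have c3 := (contDiff_pdx hux).continuous
  have c4 := (contDiff_pdy huy).continuous
  have c5 := (contDiff_pdx huy).continuous
  have c6 := (contDiff_pdy hux).continuous
  have tz := tang_zero hα hβ hu h0
  have i1 : IntegrableOn (fun p : ℝ × ℝ => cc' α β p.1 * (- p.2 * pdy u p * pdx u p) +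
      ((aa' α β p.1 * pdx u p + aa α β p.1 * pdx (pdx u) p - cc α β p.1 * p.2 * pdx (pdy u) p) * pdx u p
        + (aa α β p.1 * pdx u p - cc α β p.1 * p.2 * pdy u p) * pdx (pdx u) p)) (St α β) :=
    (intOn hα hβ (measurable_cc' α β) bcc (D := fun p => - p.2 * pdy u p * pdx u p) (by fun_prop)).add
      (intOnC hα hβ (D := fun p => (aa' α β p.1 * pdx u p + aa α β p.1 * pdx (pdx u) p - cc α β p.1 * p.2 * pdx (pdy u) p) * pdx u p
        + (aa α β p.1 * pdx u p - cc α β p.1 * p.2 * pdy u p) * pdx (pdx u) p) (by fun_prop))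
  have e1 := divX hα hβ (F := fun p => (aa α β p.1 * pdx u p - cc α β p.1 * p.2 * pdy u p) * pdx u p)
    (by fun_prop) (fun p hp => by simp only [tz p hp, zero_mul]) hs
    (fun x y hx => by
      refine ((((hasDerivAt_aa β hα x).mul (hasDerivAt_x hux x y)).sub
        (((hasDerivAt_cc β hα hx).mul_const y).mul (hasDerivAt_x huy x y))).mul
        (hasDerivAt_x hux x y)).congr_deriv ?_
      show _ = cc' α β x * (- y * pdy u (x, y) * pdx u (x, y)) +
      ((aa' α β x * pdx u (x, y) + aa α β x * pdx (pdx u) (x, y) - cc α β x * y * pdx (pdy u) (x, y)) * pdx u (x, y)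
        + (aa α β x * pdx u (x, y) - cc α β x * y * pdy u (x, y)) * pdx (pdx u) (x, y))
      simp only [Pi.mul_apply, Pi.sub_apply]
      ring) i1
  have i2 : IntegrableOn (fun p : ℝ × ℝ =>
      ((aa α β p.1 * pdy (pdx u) p - cc α β p.1 * pdy u p - cc α β p.1 * p.2 * pdy (pdy u) p) * pdy u p
        + (aa α β p.1 * pdx u p - cc α β p.1 * p.2 * pdy u p) * pdy (pdy u) p)) (St α β) :=
      (intOnC hα hβ (by fun_prop))
  have e2 := divY hα hβ (F := fun p => (aa α β p.1 * pdx u p - cc α β p.1 * p.2 * pdy u p) * pdy u p)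
    (fun x => by fun_prop) (fun p hp => by simp only [tz p hp, zero_mul])
    (fun x y => by
      refine ((((hasDerivAt_y hux x y).const_mul (aa α β x)).sub
        ((((hasDerivAt_id y).const_mul (cc α β x))).mul (hasDerivAt_y huy x y))).mul
        (hasDerivAt_y huy x y)).congr_deriv ?_
      show _ = ((aa α β x * pdy (pdx u) (x, y) - cc α β x * pdy u (x, y) - cc α β x * y * pdy (pdy u) (x, y)) * pdy u (x, y)
        + (aa α β x * pdx u (x, y) - cc α β x * y * pdy u (x, y)) * pdy (pdy u) (x, y))
      simp only [Pi.mul_apply, Pi.sub_apply, id]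
      ring) i2
  have hg3 : ContDiff ℝ (⊤ : ℕ∞) (fun p => pdx u p ^ 2 + pdy u p ^ 2) := (hux.pow 2).add (huy.pow 2)
  have hg4 : ContDiff ℝ (⊤ : ℕ∞) (fun p => u p ^ 2) := hu.pow 2
  have e3 := divT hα hβ hg3
  have e4 := divT hα hβ hg4
  have x3 : ∀ p, pdx (fun p => pdx u p ^ 2 + pdy u p ^ 2) p =
      2 * pdx u p * pdx (pdx u) p + 2 * pdy u p * pdx (pdy u) p := fun p => by
    refine ((((hasDerivAt_x hux p.1 p.2).pow 2).add ((hasDerivAt_x huy p.1 p.2).pow 2)).congr_deriv ?_).deriv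
    simp
  have y3 : ∀ p, pdy (fun p => pdx u p ^ 2 + pdy u p ^ 2) p =
      2 * pdx u p * pdy (pdx u) p + 2 * pdy u p * pdy (pdy u) p := fun p => by
    refine ((((hasDerivAt_y hux p.1 p.2).pow 2).add ((hasDerivAt_y huy p.1 p.2).pow 2)).congr_deriv ?_).deriv
    simp
  have x4 : ∀ p, pdx (fun p => u p ^ 2) p = 2 * u p * pdx u p := fun p => by
    refine (((hasDerivAt_x hu p.1 p.2).pow 2).congr_deriv ?_).deriv
    simp
  have y4 : ∀ p, pdy (fun p => u p ^ 2) p = 2 * u p * pdy u p := fun p => by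
    refine (((hasDerivAt_y hu p.1 p.2).pow 2).congr_deriv ?_).deriv
    simp
  simp only [x3, y3, x4, y4] at e3 e4
  have i3 : IntegrableOn (fun p : ℝ × ℝ => (aa' α β p.1 - cc α β p.1) * (pdx u p ^ 2 + pdy u p ^ 2)
      + aa α β p.1 * (2 * pdx u p * pdx (pdx u) p + 2 * pdy u p * pdx (pdy u) p)
      - cc α β p.1 * p.2 * (2 * pdx u p * pdy (pdx u) p + 2 * pdy u p * pdy (pdy u) p)) (St α β) :=
    intOnC hα hβ (by fun_prop)
  have i4 : IntegrableOn (fun p : ℝ × ℝ => (aa' α β p.1 - cc α β p.1) * u p ^ 2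
      + aa α β p.1 * (2 * u p * pdx u p) - cc α β p.1 * p.2 * (2 * u p * pdy u p)) (St α β) :=
    intOnC hα hβ (by fun_prop)
  obtain ⟨i5, e5⟩ := energy hα hβ hu h0 (φ := fun x => aa' α β x - cc α β x) (φ' := ff' α β)
    (by fun_prop) (by fun_prop) bff hs (fun x hx => hasDerivAt_ff β hα hx)
  have i12 := i1.add i2
  have i34 := (i4.const_mul (1 / 2 * l ^ 2)).sub (i3.const_mul (1 / 2))
  have i345 := i34.add (i5.const_mul (1 / 2))
  have itot := i12.add i345
  have etot : ∫ p in St α β, _ = _ := integral_add i12 i345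
  have e12 : ∫ p in St α β, _ = _ := integral_add i1 i2
  have e34 : ∫ p in St α β, _ = _ := integral_sub (i4.const_mul (1 / 2 * l ^ 2)) (i3.const_mul (1 / 2))
  have e345 : ∫ p in St α β, _ = _ := integral_add i34 (i5.const_mul (1 / 2))
  rw [integral_const_mul, integral_const_mul, e3, e4] at e34
  rw [integral_const_mul, e5] at e345
  rw [e1, e2] at e12
  have efin := etot
  simp only [Pi.add_apply, Pi.sub_apply] at e12 e345 e34 etot
  rw [e12, e345, e34] at etot
  refine ⟨itot.congr (Eventually.of_forall fun p => ?_), ?_⟩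
  · simp only [Pi.add_apply, Pi.sub_apply, lap, pd_symm hu]
    ring
  · rw [show (0 : ℝ) = 0 + 0 + (1 / 2 * l ^ 2 * 0 - 1 / 2 * 0 + 1 / 2 * 0) by ring, ← etot]
    refine integral_congr_ae (Eventually.of_forall fun p => ?_)
    simp only [lap, pd_symm hu]
    ring

lemma lin6 {α β : ℝ} {F1 F2 F3 F4 F5 F6 E : ℝ × ℝ → ℝ}
    (i1 : IntegrableOn F1 (St α β)) (i2 : IntegrableOn F2 (St α β)) (i3 : IntegrableOn F3 (St α β))
    (i4 : IntegrableOn F4 (St α β)) (i5 : IntegrableOn F5 (St α β)) (i6 : IntegrableOn F6 (St α β))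
    (iE : IntegrableOn E (St α β)) (hE : ∫ p in St α β, E p = 0) (c1 c2 c3 c4 c5 c6 : ℝ)
    (hle : ∀ p ∈ St α β, c1 * F1 p + c2 * F2 p + c3 * F3 p + c4 * F4 p + c5 * F5 p + c6 * F6 p ≤ E p) :
    c1 * (∫ p in St α β, F1 p) + c2 * (∫ p in St α β, F2 p) + c3 * (∫ p in St α β, F3 p)
      + c4 * (∫ p in St α β, F4 p) + c5 * (∫ p in St α β, F5 p) + c6 * (∫ p in St α β, F6 p) ≤ 0 := by
  have j1 := i1.const_mul c1
  have j2 := j1.add (i2.const_mul c2)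
  have j3 := j2.add (i3.const_mul c3)
  have j4 := j3.add (i4.const_mul c4)
  have j5 := j4.add (i5.const_mul c5)
  have j6 := j5.add (i6.const_mul c6)
  have h := setIntegral_mono_on j6 iE (measurableSet_St α β) hle
  rw [hE] at h
  have e2 : ∫ p in St α β, _ = _ := integral_add' j1 (i2.const_mul c2)
  have e3 : ∫ p in St α β, _ = _ := integral_add' j2 (i3.const_mul c3)
  have e4 : ∫ p in St α β, _ = _ := integral_add' j3 (i4.const_mul c4)
  have e5 : ∫ p in St α β, _ = _ := integral_add' j4 (i5.const_mul c5)
  have e6 : ∫ p in St α β, _ = _ := integral_add' j5 (i6.const_mul c6)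
  rw [integral_const_mul, integral_const_mul] at e2
  rw [integral_const_mul] at e3 e4 e5 e6
  linarith

/-- truncated distance -/
def kap (τ T α x : ℝ) : ℝ := max τ (min T (τ + α - x))
/-- minus its derivative -/
def sap (τ T α x : ℝ) : ℝ := if τ + α - T < x ∧ x < α then 1 else 0

@[fun_prop]
lemma continuous_kap (τ T α : ℝ) : Continuous (kap τ T α) := by unfold kap; fun_prop
@[fun_prop]
lemma measurable_sap (τ T α : ℝ) : Measurable (sap τ T α) := by
  unfold sap
  exact Measurable.ite measurableSet_Ioo measurable_const measurable_const

lemma kap_cases {τ T α : ℝ} (h : τ < T) (x : ℝ) :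
    (x ≤ τ + α - T ∧ sap τ T α x = 0 ∧ kap τ T α x = T) ∨
    (τ + α - T < x ∧ x < α ∧ sap τ T α x = 1 ∧ kap τ T α x = τ + α - x) ∨
    (α ≤ x ∧ sap τ T α x = 0 ∧ kap τ T α x = τ) := by
  unfold sap kap
  rcases le_or_gt x (τ + α - T) with h1 | h1
  · left
    refine ⟨h1, by simp [h1.not_gt], ?_⟩
    rw [min_eq_left (by linarith), max_eq_right h.le]
  · right
    rcases lt_or_ge x α with h2 | h2
    · left
      refine ⟨h1, h2, by simp [h1, h2], ?_⟩
      rw [min_eq_right (by linarith), max_eq_right (by linarith)]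
    · right
      refine ⟨h2, by simp [h2.not_gt], ?_⟩
      rw [min_eq_right (by linarith), max_eq_left (by linarith)]

lemma kap_bounds {τ T α : ℝ} (h : τ < T) (x : ℝ) : τ ≤ kap τ T α x ∧ kap τ T α x ≤ T := by
  rcases kap_cases (α := α) h x with ⟨h1, -, e⟩ | ⟨h1, h2, -, e⟩ | ⟨h1, -, e⟩ <;> rw [e] <;>
    constructor <;> linarith

lemma sap_bounds (τ T α : ℝ) (x : ℝ) : 0 ≤ sap τ T α x ∧ sap τ T α x ≤ 1 := by
  unfold sap; split_ifs <;> norm_num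

lemma hasDerivAt_kap {τ T α x : ℝ} (h : τ < T) (h1 : x ≠ α) (h2 : x ≠ τ + α - T) :
    HasDerivAt (kap τ T α) (-sap τ T α x) x := by
  rcases kap_cases (α := α) h x with ⟨h3, e, -⟩ | ⟨h3, h4, e, -⟩ | ⟨h3, e, -⟩
  · rw [e, neg_zero]
    refine (hasDerivAt_const x T).congr_of_eventuallyEq ?_
    filter_upwards [eventually_lt_nhds (lt_of_le_of_ne h3 h2)] with y hy
    unfold kap
    rw [min_eq_left (by linarith), max_eq_right h.le]
  · rw [e]
    refine ((hasDerivAt_id x).const_sub (τ + α)).congr_of_eventuallyEq ?_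
    filter_upwards [eventually_lt_nhds h4, eventually_gt_nhds h3] with y hy hy2
    unfold kap
    simp only [id]
    rw [min_eq_right (by linarith), max_eq_right (by linarith)]
  · rw [e, neg_zero]
    refine (hasDerivAt_const x τ).congr_of_eventuallyEq ?_
    filter_upwards [eventually_gt_nhds (lt_of_le_of_ne h3 (Ne.symm h1))] with y hy
    unfold kap
    rw [min_eq_right (by linarith), max_eq_left (by linarith)]

lemma hasDerivAt_kapn {τ T α x : ℝ} (h : τ < T) (h1 : -x ≠ α) (h2 : -x ≠ τ + α - T) :
    HasDerivAt (fun x => kap τ T α (-x)) (sap τ T α (-x)) x := by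
  have := (hasDerivAt_kap h h1 h2).comp x (hasDerivAt_neg x)
  exact this.congr_deriv (by ring)

/-- Hardy weight -/
def rr (τ α x : ℝ) : ℝ :=
  sap τ (τ + 2 * α) α x / kap τ (τ + 2 * α) α x ^ 2
   + sap τ (τ + 2 * α) α (-x) / kap τ (τ + 2 * α) α (-x) ^ 2

/-- kinks -/
def kinks (τ T α : ℝ) : Set ℝ := {α, τ + α - T, -α, -(τ + α - T)}
lemma kinks_countable (τ T α : ℝ) : (kinks τ T α).Countable := by
  unfold kinks; exact (Set.toFinite _).countable
lemma not_kinks {τ T α x : ℝ} (h : x ∉ kinks τ T α) :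
    x ≠ α ∧ x ≠ τ + α - T ∧ -x ≠ α ∧ -x ≠ τ + α - T := by
  simp only [kinks, mem_insert_iff, mem_singleton_iff, not_or] at h
  refine ⟨h.1, h.2.1, fun e => h.2.2.1 (by linarith), fun e => h.2.2.2 (by linarith)⟩

@[fun_prop]
lemma measurable_rr (τ α : ℝ) : Measurable (rr τ α) := by
  have := (continuous_kap τ (τ + 2 * α) α).measurable
  unfold rr; fun_prop

lemma rr_bound {τ α : ℝ} (hα : 0 < α) (hτ : 0 < τ) (x : ℝ) : 0 ≤ rr τ α x ∧ rr τ α x ≤ 2 / τ ^ 2 := by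
  have hT : τ < τ + 2 * α := by linarith
  have aux : ∀ x, 0 ≤ sap τ (τ + 2 * α) α x / kap τ (τ + 2 * α) α x ^ 2 ∧
      sap τ (τ + 2 * α) α x / kap τ (τ + 2 * α) α x ^ 2 ≤ 1 / τ ^ 2 := fun x => by
    obtain ⟨h1, -⟩ := kap_bounds (α := α) hT x
    obtain ⟨h2, h3⟩ := sap_bounds τ (τ + 2 * α) α x
    constructor
    · positivity
    · gcongr
  have h1 := aux x
  have h2 := aux (-x)
  have e : 2 / τ ^ 2 = 1 / τ ^ 2 + 1 / τ ^ 2 := by ring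
  unfold rr
  rw [e]
  constructor <;> linarith

lemma q_bound {τ α : ℝ} (hα : 0 < α) (hτ : 0 < τ) (x : ℝ) :
    (1 / kap τ (τ + 2 * α) α x - 1 / kap τ (τ + 2 * α) α (-x)) ^ 2 ≤ rr τ α x + chi α x / τ ^ 2 := by
  have hT : τ < τ + 2 * α := by linarith
  have hr := (rr_bound hα hτ x).1
  have aux : ∀ x, 0 < 1 / kap τ (τ + 2 * α) α x ∧ 1 / kap τ (τ + 2 * α) α x ≤ 1 / τ := fun x => by
    obtain ⟨h1, -⟩ := kap_bounds (α := α) hT x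
    have : 0 < kap τ (τ + 2 * α) α x := by linarith
    exact ⟨by positivity, by gcongr⟩
  obtain ⟨a1, a2⟩ := aux x
  obtain ⟨b1, b2⟩ := aux (-x)
  have wing : (1 / kap τ (τ + 2 * α) α x - 1 / kap τ (τ + 2 * α) α (-x)) ^ 2 ≤ 1 / τ ^ 2 := by
    rw [show 1 / τ ^ 2 = (1 / τ) ^ 2 by ring]
    exact sq_le_sq' (by linarith) (by linarith)
  rcases chi_cases hα x with ⟨h, -, -⟩ | ⟨h, -, -⟩ | ⟨h, h1, h2, -⟩
  · rw [h]; linarith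
  · rw [h]; linarith
  · rw [h, zero_div, add_zero]
    have s1 : sap τ (τ + 2 * α) α x = 1 := by
      unfold sap; rw [if_pos]; constructor <;> linarith
    have s2 : sap τ (τ + 2 * α) α (-x) = 1 := by
      unfold sap; rw [if_pos]; constructor <;> linarith
    unfold rr
    rw [s1, s2, ← one_div_pow, ← one_div_pow]
    nlinarith

lemma hardy {α β : ℝ} (hα : 0 < α) (hβ : 0 < β) {u : ℝ × ℝ → ℝ} (hu : ContDiff ℝ (⊤ : ℕ∞) u)
    (h0 : ∀ p : ℝ × ℝ, mm α p.1 ^ 2 + p.2 ^ 2 = β ^ 2 → u p = 0) {τ : ℝ} (hτ : 0 < τ) :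
    ∫ p in St α β, rr τ α p.1 * u p ^ 2 ≤ (∫ p in St α β, chi α p.1 * u p ^ 2) / τ ^ 2
      + 4 * ∫ p in St α β, pdx u p ^ 2 := by
  have hT : τ < τ + 2 * α := by linarith
  have c0 := hu.continuous
  have c1 := (contDiff_pdx hu).continuous
  have kp : ∀ x, kap τ (τ + 2 * α) α x ≠ 0 := fun x =>
    (lt_of_lt_of_le hτ (kap_bounds (α := α) hT x).1).ne'
  have br : ∀ p ∈ St α β, |rr τ α p.1| ≤ 2 / τ ^ 2 := fun p _ => by
    obtain ⟨h1, h2⟩ := rr_bound hα hτ p.1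
    rwa [abs_of_nonneg h1]
  have bc : ∀ p ∈ St α β, |chi α p.1| ≤ 1 := fun p _ => by
    rw [abs_of_nonneg (chi_nonneg _ _)]; exact chi_le_one _ _
  obtain ⟨iE, hE⟩ := weightX hα hβ hu h0
    (φ := fun x => 1 / kap τ (τ + 2 * α) α x - 1 / kap τ (τ + 2 * α) α (-x)) (φ' := rr τ α)
    (by
      have := continuous_kap τ (τ + 2 * α) α
      refine (continuous_const.div this kp).sub (continuous_const.div (this.comp continuous_neg) fun x => kp _))
    (by fun_prop) br (kinks_countable τ (τ + 2 * α) α) (fun x hx => by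
      obtain ⟨n1, n2, n3, n4⟩ := not_kinks hx
      have d1 := (hasDerivAt_kap hT n1 n2).fun_inv (kp x)
      have d2 := (hasDerivAt_kapn hT n3 n4).fun_inv (kp (-x))
      simp only [one_div]
      refine (d1.sub d2).congr_deriv ?_
      unfold rr; ring)
  have iH := intOn hα hβ (measurable_rr τ α) br (D := fun p => u p ^ 2) (by fun_prop)
  have iK := intOn hα hβ (measurable_chi α) bc (D := fun p => u p ^ 2) (by fun_prop)
  have iA := intOnC hα hβ (D := fun p => pdx u p ^ 2) (by fun_prop)
  have key := lin6 iH iK iA iA iA iA iE hE (1 / 2) (-(1 / (2 * τ ^ 2))) (-2) 0 0 0 (fun p hp => by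
    have q := q_bound hα hτ p.1
    set Q := 1 / kap τ (τ + 2 * α) α p.1 - 1 / kap τ (τ + 2 * α) α (-p.1) with hQ
    have e : 1 / (2 * τ ^ 2) * (chi α p.1 * u p ^ 2) = 1 / 2 * (chi α p.1 / τ ^ 2) * u p ^ 2 := by ring
    have e2 : Q ^ 2 * u p ^ 2 ≤ (rr τ α p.1 + chi α p.1 / τ ^ 2) * u p ^ 2 := by gcongr
    have e3 := sq_nonneg (Q * u p + 2 * pdx u p)
    show _ ≤ rr τ α p.1 * u p ^ 2 + Q * (2 * u p * pdx u p)
    nlinarith)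
  have e : 1 / (2 * τ ^ 2) * (∫ p in St α β, chi α p.1 * u p ^ 2)
      = 1 / 2 * ((∫ p in St α β, chi α p.1 * u p ^ 2) / τ ^ 2) := by ring
  linarith

lemma poincare {α β : ℝ} (hα : 0 < α) (hβ : 0 < β) {u : ℝ × ℝ → ℝ} (hu : ContDiff ℝ (⊤ : ℕ∞) u)
    (h0 : ∀ p : ℝ × ℝ, mm α p.1 ^ 2 + p.2 ^ 2 = β ^ 2 → u p = 0) :
    ∫ p in St α β, u p ^ 2 ≤ 4 * (α + β) ^ 2 * ∫ p in St α β, pdx u p ^ 2 := by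
  have c0 := hu.continuous
  have c1 := (contDiff_pdx hu).continuous
  obtain ⟨iE, hE⟩ := weightX hα hβ hu h0 (φ := fun x => x) (φ' := fun _ => 1) (by fun_prop)
    (by fun_prop) (C := 1) (fun p _ => by simp) (s := ∅) (by simp) (fun x _ => hasDerivAt_id x)
  have iN := intOnC hα hβ (D := fun p => u p ^ 2) (by fun_prop)
  have iA := intOnC hα hβ (D := fun p => pdx u p ^ 2) (by fun_prop)
  have key := lin6 iN iA iA iA iA iA iE hE (1 / 2) (-(2 * (α + β) ^ 2)) 0 0 0 0 (fun p hp => by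
    obtain ⟨-, hx, -⟩ := St_bounds hα hβ hp
    have h1 : p.1 ^ 2 ≤ (α + β) ^ 2 := by rw [← sq_abs]; exact pow_le_pow_left₀ (abs_nonneg _) hx 2
    have h2 : p.1 ^ 2 * pdx u p ^ 2 ≤ (α + β) ^ 2 * pdx u p ^ 2 := by gcongr
    have e3 := sq_nonneg (u p + 2 * (p.1 * pdx u p))
    nlinarith)
  linarith

lemma absle {a b x y C : ℝ} (h : |a| ≤ C) (hx : 0 ≤ x) (hy : b ^ 2 ≤ x * y) (hy0 : 0 ≤ y) :
    a * b ≤ C * (x + y) / 2 ∧ -(C * (x + y) / 2) ≤ a * b := by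
  have hb : |b| ≤ (x + y) / 2 := by
    apply abs_le_of_sq_le_sq _ (by linarith)
    nlinarith [sq_nonneg (x - y)]
  have hC : 0 ≤ C := (abs_nonneg a).trans h
  have : |a * b| ≤ C * ((x + y) / 2) := by rw [abs_mul]; gcongr
  have := abs_le.1 this
  constructor <;> linarith [this.1, this.2]

lemma rellich_bound {α β : ℝ} (hα : 0 < α) (hβ : 0 < β) : ∃ C1 : ℝ, 1 ≤ C1 ∧
    ∀ (u : ℝ × ℝ → ℝ) (_ : ContDiff ℝ (⊤ : ℕ∞) u)
    (_ : ∀ p : ℝ × ℝ, mm α p.1 ^ 2 + p.2 ^ 2 = β ^ 2 → u p = 0) (l : ℝ),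
    ∫ p in St α β, pdx u p ^ 2 ≤ C1 * ((∫ p in St α β, chi α p.1 * (pdx u p ^ 2 + pdy u p ^ 2))
      + (∫ p in St α β, chi α p.1 * u p ^ 2) + ∫ p in St α β, (lap u p - l ^ 2 * u p) ^ 2) := by
  obtain ⟨D, hD1, hD⟩ := coef_bounds hα hβ
  set B := α + β with hB
  have hBp : 0 < B := by positivity
  refine ⟨8 * D + 2 * (D ^ 2 * B ^ 2 + D ^ 2 + D), by nlinarith [sq_nonneg (D * B), sq_nonneg D], fun u hu h0 l => ?_⟩
  have c0 := hu.continuous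
  have hux := contDiff_pdx hu
  have huy := contDiff_pdy hu
  have c1 := hux.continuous
  have c2 := huy.continuous
  have c3 := (contDiff_pdx hux).continuous
  have c4 := (contDiff_pdy huy).continuous
  have bc : ∀ p ∈ St α β, |chi α p.1| ≤ 1 := fun p _ => by
    rw [abs_of_nonneg (chi_nonneg _ _)]; exact chi_le_one _ _
  have iG := intOn hα hβ (measurable_chi α) bc (D := fun p => pdx u p ^ 2 + pdy u p ^ 2) (by fun_prop)
  have iK := intOn hα hβ (measurable_chi α) bc (D := fun p => u p ^ 2) (by fun_prop)
  have iA := intOnC hα hβ (D := fun p => pdx u p ^ 2) (by fun_prop)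
  have iN := intOnC hα hβ (D := fun p => u p ^ 2) (by fun_prop)
  have iM := intOnC hα hβ (D := fun p => (lap u p - l ^ 2 * u p) ^ 2) (by unfold lap; fun_prop)
  obtain ⟨iE, hE⟩ := rellich hα hβ hu h0 l
  have key := lin6 iA iG iK iN iM iM iE hE (3 / 4) (-(4 * D)) (-(4 * D)) (-(1 / (16 * B ^ 2)))
      (-(D ^ 2 * B ^ 2 + D ^ 2 + D)) 0 (fun p hp => by
    obtain ⟨b1, b2, -, b4, b5, b6, b7, b8⟩ := hD p hp
    have hx0 := chi_nonneg α p.1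
    have hx1 := chi_le_one α p.1
    set χ := chi α p.1
    set X := pdx u p
    set Y := pdy u p
    set U := u p
    set f := lap u p - l ^ 2 * U
    have t1 : (1 - aa' α β p.1) * X ^ 2 ≤ D * χ * X ^ 2 := by gcongr
    have t2 : p.2 * cc' α β p.1 * (X * Y) ≤ D * χ * (X ^ 2 + Y ^ 2) / 2 :=
      (absle b4 (sq_nonneg X) (le_of_eq (by ring)) (sq_nonneg Y)).1
    have t3 : cc α β p.1 * Y ^ 2 ≤ D * χ * Y ^ 2 :=
      mul_le_mul_of_nonneg_right ((le_abs_self _).trans b2) (sq_nonneg Y)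
    have t4 : aa α β p.1 * (f * X) ≤ D * (X ^ 2 / (2 * D) + 2 * D * f ^ 2) / 2 :=
      (absle b7 (by positivity) (le_of_eq (by field_simp)) (by positivity)).1
    have t4' : D * (X ^ 2 / (2 * D) + 2 * D * f ^ 2) / 2 = X ^ 2 / 4 + D ^ 2 * f ^ 2 := by
      field_simp; ring
    have t5 : -(D * χ * (f ^ 2 + Y ^ 2) / 2) ≤ cc α β p.1 * p.2 * (f * Y) :=
      (absle b8 (sq_nonneg f) (le_of_eq (by ring)) (sq_nonneg Y)).2
    have t6 : -(D * χ * (U ^ 2 + X ^ 2) / 2) ≤ ff' α β p.1 * (U * X) :=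
      (absle b5 (sq_nonneg U) (le_of_eq (by ring)) (sq_nonneg X)).2
    have t7 : (aa' α β p.1 - cc α β p.1) * (U * f) ≤ D * (U ^ 2 / (4 * D * B ^ 2) + 4 * D * B ^ 2 * f ^ 2) / 2 :=
      (absle b6 (by positivity) (le_of_eq (by field_simp)) (by positivity)).1
    have t7' : D * (U ^ 2 / (4 * D * B ^ 2) + 4 * D * B ^ 2 * f ^ 2) / 2 =
       2 * (1 / (16 * B ^ 2) * U ^ 2) + 2 * D ^ 2 * B ^ 2 * f ^ 2 := by
      field_simp; ring
    have t8 : D * χ * f ^ 2 ≤ D * f ^ 2 := by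
      have := mul_nonneg (mul_nonneg (by linarith : (0:ℝ) ≤ D) (sub_nonneg.2 hx1)) (sq_nonneg f)
      linarith only [this]
    have n1 : 0 ≤ D * χ * X ^ 2 := by positivity
    have n2 : 0 ≤ D * χ * Y ^ 2 := by positivity
    have n3 : 0 ≤ D * χ * U ^ 2 := by positivity
    have n4 : 0 ≤ D * f ^ 2 := by positivity
    linarith only [t1, t2, t3, t4, t4', t5, t6, t7, t7', t8, n1, n2, n3, n4])
  have hP := poincare hα hβ hu h0
  have hP' : 1 / (16 * B ^ 2) * (∫ p in St α β, u p ^ 2) ≤ 1 / 4 * ∫ p in St α β, pdx u p ^ 2 := by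
    have : 1 / (16 * B ^ 2) * (∫ p in St α β, u p ^ 2) ≤
      1 / (16 * B ^ 2) * (4 * B ^ 2 * ∫ p in St α β, pdx u p ^ 2) := by gcongr
    refine this.trans_eq ?_
    field_simp; ring
  have nG : 0 ≤ ∫ p in St α β, chi α p.1 * (pdx u p ^ 2 + pdy u p ^ 2) :=
    integral_nonneg fun p => mul_nonneg (chi_nonneg _ _) (by positivity)
  have nK : 0 ≤ ∫ p in St α β, chi α p.1 * u p ^ 2 :=
    integral_nonneg fun p => mul_nonneg (chi_nonneg _ _) (by positivity)
  have nM : 0 ≤ ∫ p in St α β, (lap u p - l ^ 2 * u p) ^ 2 :=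
    integral_nonneg fun p => by positivity
  set A := ∫ p in St α β, pdx u p ^ 2
  set G := ∫ p in St α β, chi α p.1 * (pdx u p ^ 2 + pdy u p ^ 2)
  set K := ∫ p in St α β, chi α p.1 * u p ^ 2
  set M := ∫ p in St α β, (lap u p - l ^ 2 * u p) ^ 2
  have m1 : 0 ≤ (D ^ 2 * B ^ 2 + D ^ 2 + D) * (G + K) := by positivity
  have m2 : 0 ≤ D * M := by positivity
  linarith

/-- logarithmic cutoff -/
def lg (ε τ T α x : ℝ) : ℝ := ε * Real.log (T / kap τ T α x)

lemma lg_facts {ε τ T α : ℝ} (hε : 0 < ε) (hτ : 0 < τ) (hT : τ < T) (hT2 : T ≤ τ + 2 * α)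
    (hl : ε * Real.log (T / τ) = 1) (x : ℝ) :
    0 ≤ lg ε τ T α x ∧ lg ε τ T α x ≤ 1 ∧ (α ≤ x → lg ε τ T α x = 1) ∧
    (x < α → lg ε τ T α x * (1 / T ^ 2) ≤ sap τ (τ + 2 * α) α x / kap τ (τ + 2 * α) α x ^ 2) ∧
    (sap τ T α x / kap τ T α x) ^ 2 ≤ sap τ (τ + 2 * α) α x / kap τ (τ + 2 * α) α x ^ 2 := by
  obtain ⟨k1, k2⟩ := kap_bounds (α := α) hT x
  have kp : 0 < kap τ T α x := by linarith
  have hT0 : 0 < T := by linarith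
  have a1 : 0 ≤ lg ε τ T α x := by
    unfold lg
    have := Real.log_nonneg ((one_le_div kp).2 k2)
    positivity
  have a2 : lg ε τ T α x ≤ 1 := by
    rw [← hl]; unfold lg; gcongr
  obtain ⟨s0, -⟩ := sap_bounds τ (τ + 2 * α) α x
  have r0 : 0 ≤ sap τ (τ + 2 * α) α x / kap τ (τ + 2 * α) α x ^ 2 := by positivity
  refine ⟨a1, a2, fun h => ?_, ?_⟩
  · rcases kap_cases (α := α) hT x with ⟨h1, -, e⟩ | ⟨h1, h2, -, e⟩ | ⟨h1, -, e⟩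
    · exfalso; linarith
    · exfalso; linarith
    · unfold lg; rw [e, hl]
  · rcases kap_cases (α := α) hT x with ⟨h1, e0, e⟩ | ⟨h1, h2, e0, e⟩ | ⟨h1, e0, e⟩
    · have z : lg ε τ T α x = 0 := by unfold lg; rw [e, div_self hT0.ne']; simp
      rw [z, e0]; exact ⟨fun _ => by simpa using r0, by simpa using r0⟩
    · have hT' : τ < τ + 2 * α := by linarith
      rcases kap_cases (α := α) hT' x with ⟨h1', e0', e'⟩ | ⟨h1', h2', e0', e'⟩ | ⟨h1', e0', e'⟩
      · exfalso; linarith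
      · rw [e0, e, e0', e']
        refine ⟨fun _ => ?_, by rw [div_pow, one_pow]⟩
        have hk : 0 < τ + α - x := by linarith
        have : 1 / T ^ 2 ≤ 1 / (τ + α - x) ^ 2 := by gcongr; linarith
        have p : 0 < 1 / T ^ 2 := by positivity
        nlinarith
      · exfalso; linarith
    · refine ⟨fun h => by exfalso; linarith, ?_⟩
      rw [e0]; simpa using r0

lemma cutoff {α β : ℝ} (hα : 0 < α) (hβ : 0 < β) {u : ℝ × ℝ → ℝ} (hu : ContDiff ℝ (⊤ : ℕ∞) u)
    (h0 : ∀ p : ℝ × ℝ, mm α p.1 ^ 2 + p.2 ^ 2 = β ^ 2 → u p = 0) {ε τ T l : ℝ}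
    (hε : 0 < ε) (hτ : 0 < τ) (hT : τ < T) (hT2 : T ≤ τ + 2 * α)
    (hl : ε * Real.log (T / τ) = 1) (hl1 : 1 ≤ l) (hlT : l ^ 2 * T ^ 2 = ε) :
    ∫ p in St α β, chi α p.1 * (pdx u p ^ 2 + pdy u p ^ 2) ≤
      2 * ε * (∫ p in St α β, rr τ α p.1 * u p ^ 2) + ε / 2 * (∫ p in St α β, pdx u p ^ 2)
      + 3 * l ^ 2 * (∫ p in St α β, chi α p.1 * u p ^ 2)
      + ∫ p in St α β, (lap u p - l ^ 2 * u p) ^ 2 := by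
  have c0 := hu.continuous
  have hux := contDiff_pdx hu
  have huy := contDiff_pdy hu
  have c1 := hux.continuous
  have c2 := huy.continuous
  have c3 := (contDiff_pdx hux).continuous
  have c4 := (contDiff_pdy huy).continuous
  have bc : ∀ p ∈ St α β, |chi α p.1| ≤ 1 := fun p _ => by
    rw [abs_of_nonneg (chi_nonneg _ _)]; exact chi_le_one _ _
  have br : ∀ p ∈ St α β, |rr τ α p.1| ≤ 2 / τ ^ 2 := fun p _ => by
    obtain ⟨h1, h2⟩ := rr_bound hα hτ p.1
    rwa [abs_of_nonneg h1]
  have iG := intOn hα hβ (measurable_chi α) bc (D := fun p => pdx u p ^ 2 + pdy u p ^ 2) (by fun_prop)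
  have iK := intOn hα hβ (measurable_chi α) bc (D := fun p => u p ^ 2) (by fun_prop)
  have iH := intOn hα hβ (measurable_rr τ α) br (D := fun p => u p ^ 2) (by fun_prop)
  have iA := intOnC hα hβ (D := fun p => pdx u p ^ 2) (by fun_prop)
  have iM := intOnC hα hβ (D := fun p => (lap u p - l ^ 2 * u p) ^ 2) (by unfold lap; fun_prop)
  have hT0 : 0 < T := by linarith
  have kp : ∀ x, 0 < kap τ T α x := fun x => (lt_of_lt_of_le hτ (kap_bounds (α := α) hT x).1)
  have mk := (continuous_kap τ T α).measurable
  have bs : ∀ x, 0 ≤ sap τ T α x / kap τ T α x ∧ sap τ T α x / kap τ T α x ≤ 1 / τ := fun x => by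
    obtain ⟨h1, -⟩ := kap_bounds (α := α) hT x
    obtain ⟨h2, h3⟩ := sap_bounds τ T α x
    have := kp x
    constructor
    · positivity
    · gcongr
  obtain ⟨iE, hE⟩ := energy hα hβ hu h0
    (φ := fun x => lg ε τ T α x + lg ε τ T α (-x))
    (φ' := fun x => ε * (sap τ T α x / kap τ T α x - sap τ T α (-x) / kap τ T α (-x)))
    (by
      have h : Continuous (lg ε τ T α) := by
        unfold lg
        refine continuous_const.mul (Continuous.log (continuous_const.div (continuous_kap τ T α)
          fun x => (kp x).ne') fun x => (div_pos hT0 (kp x)).ne')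
      exact h.add (h.comp continuous_neg))
    (by fun_prop) (C := ε * (1 / τ))
    (fun p _ => by
      rw [abs_mul, abs_of_pos hε]
      gcongr
      have h1 := bs p.1
      have h2 := bs (-p.1)
      rw [abs_le]
      constructor <;> linarith)
    (kinks_countable τ T α) (fun x hx => by
      obtain ⟨n1, n2, n3, n4⟩ := not_kinks hx
      have d1 := ((hasDerivAt_kap hT n1 n2).log (kp x).ne').const_sub (Real.log T)
      have d2 := ((hasDerivAt_kapn hT n3 n4).log (kp (-x)).ne').const_sub (Real.log T)
      have e : (fun x => lg ε τ T α x + lg ε τ T α (-x)) =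
        fun x => ε * (Real.log T - Real.log (kap τ T α x)) + ε * (Real.log T - Real.log (kap τ T α (-x))) := by
        funext x
        unfold lg
        rw [Real.log_div hT0.ne' (kp _).ne', Real.log_div hT0.ne' (kp _).ne']
      rw [e]
      refine ((d1.const_mul ε).add (d2.const_mul ε)).congr_deriv ?_
      ring)
  have key := lin6 iG iH iA iK iM iM iE hE 1 (-(2 * ε)) (-(ε / 2)) (-(3 * l ^ 2)) (-1) 0 (fun p hp => by
    obtain ⟨r0, -⟩ := rr_bound hα hτ p.1
    obtain ⟨a1, a2, a3, a4, a5⟩ := lg_facts hε hτ hT hT2 hl p.1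
    obtain ⟨b1, b2, b3, b4, b5⟩ := lg_facts hε hτ hT hT2 hl (-p.1)
    have s1 := bs p.1
    have s2 := bs (-p.1)
    have hl2 : l ^ 2 = ε * (1 / T ^ 2) := by rw [← hlT]; field_simp
    -- cutoff facts
    have f1 : chi α p.1 ≤ lg ε τ T α p.1 + lg ε τ T α (-p.1) := by
      rcases chi_cases hα p.1 with ⟨h, h1, -⟩ | ⟨h, h1, -⟩ | ⟨h, -, -, -⟩
      · rw [h]
        first | linarith [a3 h1] | linarith [b3 (by linarith)]
      · rw [h]
        first | linarith [a3 h1] | linarith [b3 (by linarith)]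
      · rw [h]; linarith
    have f2 : (lg ε τ T α p.1 + lg ε τ T α (-p.1)) * l ^ 2 ≤ 2 * l ^ 2 * chi α p.1 + ε * rr τ α p.1 := by
      have w : (lg ε τ T α p.1 + lg ε τ T α (-p.1)) * l ^ 2 ≤ 2 * l ^ 2 := by
        have : (lg ε τ T α p.1 + lg ε τ T α (-p.1)) * l ^ 2 ≤ (1 + 1) * l ^ 2 := by gcongr
        linarith
      have w2 : 0 ≤ ε * rr τ α p.1 := by positivity
      rcases chi_cases hα p.1 with ⟨h, h1, -⟩ | ⟨h, h1, -⟩ | ⟨h, h1, h2, -⟩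
      · rw [h]; linarith
      · rw [h]; linarith
      · rw [h, hl2]
        have := a4 (by linarith)
        have := b4 (by linarith)
        have w3 : (lg ε τ T α p.1 + lg ε τ T α (-p.1)) * (1 / T ^ 2) ≤ rr τ α p.1 := by
          unfold rr; linarith
        have := mul_le_mul_of_nonneg_left w3 hε.le
        linarith
    have f3 : (sap τ T α p.1 / kap τ T α p.1 - sap τ T α (-p.1) / kap τ T α (-p.1)) ^ 2 ≤ rr τ α p.1 := by
      unfold rr
      have := mul_nonneg s1.1 s2.1
      linarith only [this, a5, b5]
    set P := sap τ T α p.1 / kap τ T α p.1 - sap τ T α (-p.1) / kap τ T α (-p.1)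
    have f4 : lg ε τ T α p.1 + lg ε τ T α (-p.1) ≤ 2 := by linarith
    have f0 : 0 ≤ lg ε τ T α p.1 + lg ε τ T α (-p.1) := by linarith
    show _ ≤ ε * P * (u p * pdx u p) + (lg ε τ T α p.1 + lg ε τ T α (-p.1)) * (pdx u p ^ 2 + pdy u p ^ 2
      + u p * (pdx (pdx u) p + pdy (pdy u) p))
    set φ := lg ε τ T α p.1 + lg ε τ T α (-p.1)
    set χ := chi α p.1
    set r := rr τ α p.1
    have e : pdx (pdx u) p + pdy (pdy u) p = -((lap u p - l ^ 2 * u p) + l ^ 2 * u p) := by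
      unfold lap; ring
    rw [e]
    set f := lap u p - l ^ 2 * u p
    set X := pdx u p
    set Y := pdy u p
    set U := u p
    have g1 : χ * (X ^ 2 + Y ^ 2) ≤ φ * (X ^ 2 + Y ^ 2) := by gcongr
    have g2 : -(ε / 2 * (r * U ^ 2 + X ^ 2)) ≤ ε * P * (U * X) := by
      have h1 : P ^ 2 * U ^ 2 ≤ r * U ^ 2 := by gcongr
      have h2 : 0 ≤ ε * (r * U ^ 2 + X ^ 2 + 2 * (P * U * X)) := by
        have := sq_nonneg (P * U + X)
        apply mul_nonneg hε.le
        linarith only [this, h1]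
      linarith only [h2]
    have g3 : φ * l ^ 2 * U ^ 2 ≤ (2 * l ^ 2 * χ + ε * r) * U ^ 2 := by gcongr
    have g4 : φ * (U * f) ≤ 1 / 2 * (φ * l ^ 2 * U ^ 2) + f ^ 2 := by
      have h1 : U * f ≤ 1 / 2 * (l ^ 2 * U ^ 2) + 1 / 2 * f ^ 2 := by
        have h3 : U ^ 2 ≤ l ^ 2 * U ^ 2 := by
          exact le_mul_of_one_le_left (sq_nonneg U) (one_le_pow₀ hl1)
        linarith only [sq_nonneg (U - f), h3]
      have h2 := mul_le_mul_of_nonneg_left h1 f0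
      have h3 : φ * f ^ 2 ≤ 2 * f ^ 2 := by gcongr
      linarith only [h2, h3]
    linarith only [g1, g2, g3, g4])
  linarith

lemma main_smooth {α β : ℝ} (hα : 0 < α) (hβ : 0 < β) : ∃ C > 0, ∃ l₀ > 0,
    ∀ (u : ℝ × ℝ → ℝ) (_ : ContDiff ℝ (⊤ : ℕ∞) u)
    (_ : ∀ p : ℝ × ℝ, mm α p.1 ^ 2 + p.2 ^ 2 = β ^ 2 → u p = 0) (l : ℝ) (_ : l₀ ≤ l)
    (_ : ∫ p in St α β, u p ^ 2 = 1),
    C ≤ l ^ 2 * (∫ p in St α β, (lap u p - l ^ 2 * u p) ^ 2)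
      + l ^ 4 * (∫ p in St α β, chi α p.1 * u p ^ 2) := by
  obtain ⟨C1, hC1, hR⟩ := rellich_bound hα hβ
  obtain ⟨ε, hεd⟩ : ∃ ε : ℝ, ε = 1 / (17 * C1) := ⟨_, rfl⟩
  have hε : 0 < ε := by rw [hεd]; positivity
  have hεC : C1 * (17 * ε) = 1 := by rw [hεd]; field_simp
  obtain ⟨E, hE⟩ : ∃ E : ℝ, E = Real.exp (1 / ε) := ⟨_, rfl⟩
  have hE1 : 1 < E := by rw [hE]; exact Real.one_lt_exp_iff.2 (by positivity)
  obtain ⟨C2, hC2⟩ : ∃ C2 : ℝ, C2 = 2 * C1 * (4 + 2 * E ^ 2) := ⟨_, rfl⟩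
  have hC2p : 0 < C2 := by rw [hC2]; positivity
  refine ⟨1 / (4 * (α + β) ^ 2 * C2), by positivity, max 1 (√ε / (2 * α)), by positivity,
    fun u hu h0 l hl hN => ?_⟩
  have hl1 : 1 ≤ l := (le_max_left _ _).trans hl
  have hl2 : √ε / (2 * α) ≤ l := (le_max_right _ _).trans hl
  have hlp : 0 < l := by linarith
  have hse : 0 < √ε := Real.sqrt_pos.2 hε
  have hss : √ε ^ 2 = ε := Real.sq_sqrt hε.le
  obtain ⟨T, hT⟩ : ∃ T : ℝ, T = √ε / l := ⟨_, rfl⟩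
  obtain ⟨τ, hτ⟩ : ∃ τ : ℝ, τ = T / E := ⟨_, rfl⟩
  have hTp : 0 < T := by rw [hT]; positivity
  have hτp : 0 < τ := by rw [hτ]; positivity
  have hτT : τ < T := by rw [hτ]; exact div_lt_self hTp hE1
  have hT2 : T ≤ 2 * α := by
    rw [hT, div_le_iff₀ hlp]
    rw [div_le_iff₀ (by positivity)] at hl2
    linarith
  have hlog : ε * Real.log (T / τ) = 1 := by
    have : T / τ = E := by rw [hτ]; field_simp
    rw [this, hE, Real.log_exp]; field_simp
  have hlT : l ^ 2 * T ^ 2 = ε := by rw [hT, div_pow, hss]; field_simp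
  have h1 := cutoff hα hβ hu h0 hε hτp hτT (by linarith) hlog hl1 hlT
  have h2 := hardy hα hβ hu h0 hτp
  have h3 := hR u hu h0 l
  have h4 := poincare hα hβ hu h0
  rw [hN] at h4
  have nK : 0 ≤ ∫ p in St α β, chi α p.1 * u p ^ 2 :=
    integral_nonneg fun p => mul_nonneg (chi_nonneg _ _) (by positivity)
  have nM : 0 ≤ ∫ p in St α β, (lap u p - l ^ 2 * u p) ^ 2 :=
    integral_nonneg fun p => by positivity
  set A := ∫ p in St α β, pdx u p ^ 2
  set G := ∫ p in St α β, chi α p.1 * (pdx u p ^ 2 + pdy u p ^ 2)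
  set K := ∫ p in St α β, chi α p.1 * u p ^ 2
  set M := ∫ p in St α β, (lap u p - l ^ 2 * u p) ^ 2
  set H := ∫ p in St α β, rr τ α p.1 * u p ^ 2
  have e1 : ε * (K / τ ^ 2) = E ^ 2 * l ^ 2 * K := by
    rw [hτ, ← hlT]; field_simp
  have h5 : ε * H ≤ ε * (K / τ ^ 2 + 4 * A) := by gcongr
  have h6 : G ≤ 17 / 2 * ε * A + (3 + 2 * E ^ 2) * (l ^ 2 * K) + M := by
    linarith only [e1, h5, h1]
  have hKl : K ≤ l ^ 2 * K := le_mul_of_one_le_left nK (one_le_pow₀ hl1)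
  have h7 : G + K + M ≤ 17 / 2 * ε * A + (4 + 2 * E ^ 2) * (l ^ 2 * K) + 2 * M := by linarith
  have h8 := mul_le_mul_of_nonneg_left h7 (by linarith : 0 ≤ C1)
  have h9 : A ≤ C2 * (l ^ 2 * K + M) := by
    have m : 0 ≤ C1 * (2 + 2 * E ^ 2) * M := by positivity
    have : C1 * (17 / 2 * ε * A) = A / 2 := by linear_combination (A / 2) * hεC
    rw [hC2]
    linarith only [m, this, h8, h3]
  have h10 : l ^ 2 * K + M ≤ l ^ 2 * M + l ^ 4 * K := by
    have q : 1 ≤ l ^ 2 := one_le_pow₀ hl1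
    have q1 : M ≤ l ^ 2 * M := le_mul_of_one_le_left nM q
    have q2 : l ^ 2 * K ≤ l ^ 2 * (l ^ 2 * K) := le_mul_of_one_le_left (by positivity) q
    linarith only [q1, q2]
  rw [div_le_iff₀ (by positivity)]
  calc (1 : ℝ) ≤ 4 * (α + β) ^ 2 * A := h4
    _ ≤ 4 * (α + β) ^ 2 * (C2 * (l ^ 2 * M + l ^ 4 * K)) := by
      gcongr
      exact h9.trans (by gcongr)
    _ = _ := by ring

lemma pdx_congr {u v : ℝ × ℝ → ℝ} {p : ℝ × ℝ} (h : u =ᶠ[nhds p] v) : pdx u =ᶠ[nhds p] pdx v := by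
  filter_upwards [h.eventuallyEq_nhds] with q hq
  unfold pdx
  refine Filter.EventuallyEq.deriv_eq ?_
  have : Tendsto (fun t : ℝ => (t, q.2)) (nhds q.1) (nhds q) :=
    (by fun_prop : Continuous fun t : ℝ => (t, q.2)).tendsto q.1
  exact this.eventually hq

lemma pdy_congr {u v : ℝ × ℝ → ℝ} {p : ℝ × ℝ} (h : u =ᶠ[nhds p] v) : pdy u =ᶠ[nhds p] pdy v := by
  filter_upwards [h.eventuallyEq_nhds] with q hq
  unfold pdy
  refine Filter.EventuallyEq.deriv_eq ?_
  have : Tendsto (fun t : ℝ => (q.1, t)) (nhds q.2) (nhds q) :=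
    (by fun_prop : Continuous fun t : ℝ => (q.1, t)).tendsto q.2
  exact this.eventually hq

lemma lap_congr {u v : ℝ × ℝ → ℝ} {p : ℝ × ℝ} (h : u =ᶠ[nhds p] v) : lap u p = lap v p := by
  unfold lap
  rw [(pdx_congr (pdx_congr h)).eq_of_nhds, (pdy_congr (pdy_congr h)).eq_of_nhds]

lemma extend {S V : Set (ℝ × ℝ)} (hS : IsClosed S) (hV : IsOpen V) (hSV : S ⊆ V) {u : ℝ × ℝ → ℝ}
    (hu : ContDiffOn ℝ (⊤ : ℕ∞) u V) :
    ∃ v : ℝ × ℝ → ℝ, ContDiff ℝ (⊤ : ℕ∞) v ∧ ∀ p ∈ S, v =ᶠ[nhds p] u := by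
  obtain ⟨f, h0, h1, -⟩ := exists_contMDiffMap_zero_one_nhds_of_isClosed (n := (⊤ : ℕ∞))
    (modelWithCornersSelf ℝ (ℝ × ℝ)) hV.isClosed_compl hS
    (Set.disjoint_left.2 fun x hx hx' => hx (hSV hx'))
  have hf : ContDiff ℝ (⊤ : ℕ∞) f := f.contMDiff.contDiff
  refine ⟨fun p => f p * u p, ?_, fun p hp => ?_⟩
  · rw [contDiff_iff_contDiffAt]
    intro p
    by_cases hp : p ∈ V
    · exact hf.contDiffAt.mul (hu.contDiffAt (hV.mem_nhds hp))
    · have h := (eventually_nhdsSet_iff_forall.1 h0) p hp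
      refine (contDiffAt_const (c := (0 : ℝ))).congr_of_eventuallyEq ?_
      filter_upwards [h] with q hq
      rw [hq, zero_mul]
  · have h := (eventually_nhdsSet_iff_forall.1 h1) p hp
    filter_upwards [h] with q hq
    rw [hq, one_mul]


/-- There are `C > 0` and `λ₀ > 0` depending only on `α, β` such that every
real Dirichlet quasimode datum with `λ ≥ λ₀` and `‖u‖_{L²(S)} = 1` satisfies
`λ² ‖f‖²_{L²(S)} + λ⁴ ‖u‖²_{L²(W)} ≥ C`. -/
theorem stmt2 (α β : ℝ) (hα : 0 < α) (hβ : 0 < β) :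
    ∃ C > 0, ∃ lam₀ > 0, ∀ d : QMDatum α β, d.lam ≥ lam₀ →
      (∫ p in Stadium α β, (d.u p) ^ 2) = 1 →
      d.lam ^ 2 * (∫ p in Stadium α β, (d.f p) ^ 2) +
        d.lam ^ 4 * (∫ p in Wings α β, (d.u p) ^ 2) ≥ C := by
  obtain ⟨C, hC, l₀, hl₀, H⟩ := main_smooth hα hβ
  refine ⟨C, hC, l₀, hl₀, fun d hd hN => ?_⟩
  obtain ⟨V, hV, hSV, hu⟩ := d.smooth
  have eS : Stadium α β = St α β := stadium_eq hα hβ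
  rw [eS] at hSV hN ⊢
  obtain ⟨v, hv, hvu⟩ := extend (isClosed_St α β) hV hSV hu
  have ev : ∀ p ∈ St α β, v p = d.u p := fun p hp => (hvu p hp).eq_of_nhds
  have ef : ∀ p ∈ St α β, lap v p - d.lam ^ 2 * v p = d.f p := fun p hp => by
    rw [lap_congr (hvu p hp), ev p hp]
    exact d.eqn p (eS ▸ hp)
  have h0 : ∀ p : ℝ × ℝ, mm α p.1 ^ 2 + p.2 ^ 2 = β ^ 2 → v p = 0 := fun p hp => by
    rw [ev p (show _ ≤ _ from hp.le)]
    exact d.dirichlet p (bdry_mem hα hp)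
  have mS := measurableSet_St α β
  have h := H v hv h0 d.lam hd (by
    rw [← hN]
    exact setIntegral_congr_fun mS fun p hp => by simp only [ev p hp])
  have e1 : ∫ p in St α β, (lap v p - d.lam ^ 2 * v p) ^ 2 = ∫ p in St α β, d.f p ^ 2 :=
    setIntegral_congr_fun mS fun p hp => by simp only [ef p hp]
  have mW : MeasurableSet {p : ℝ × ℝ | α ≤ |p.1|} :=
    measurableSet_le measurable_const (by fun_prop)
  have e2 : ∫ p in St α β, chi α p.1 * v p ^ 2 = ∫ p in Wings α β, d.u p ^ 2 := by
    rw [wings_eq hα]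
    change _ = ∫ p in St α β ∩ _, _
    rw [← setIntegral_indicator mW]
    refine setIntegral_congr_fun mS fun p hp => ?_
    simp only [ev p hp]
    by_cases hp2 : α ≤ |p.1|
    · rw [indicator_of_mem (show p ∈ {p : ℝ × ℝ | α ≤ |p.1|} from hp2), chi, if_pos hp2, one_mul]
    · rw [indicator_of_notMem (show p ∉ {p : ℝ × ℝ | α ≤ |p.1|} from hp2), chi, if_neg hp2, zero_mul]
  rw [e1, e2] at h
  exact h
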